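/- arXiv:2009.14077 — 2 statements merged into one kernel-verified Lean document; each statement's English description precedes it below -/
import Mathlib

section
/- For each integer k ≥ 1 and crossing parameter η = π/3, the elliptic Tsuchiya determinant ℍ_{2k}(x₁,…,x_k; x_{k+1},…,x_{2k}) is a symmetric function of all 2k variables: for every permutation σ of {1,…,2k} one has ℍ_{2k}(x_{σ(1)},…,x_{σ(k)}; x_{σ(k+1)},…,x_{σ(2k)}) = ℍ_{2k}(x₁,…,x_k; x_{k+1},…,x_{2k}) at every point of ℂ^{2k} where both sides are defined (i.e. where the Vandermonde-type denominators and the entries 𝕙(x_i,x_{j+k}) are nonzero). -/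
noncomputable section

open Complex
open scoped BigOperators

/-- Jacobi theta function `ϑ₁(z|τ)` with nome `p = e^{iπτ}` (Whittaker–Watson convention). -/
def th1 (z τ : ℂ) : ℂ :=
  -Complex.I * ∑' n : ℤ, (-1 : ℂ) ^ n *
    Complex.exp ((Real.pi : ℂ) * Complex.I * τ * ((n : ℂ) + 1/2) ^ 2 + (2 * (n : ℂ) + 1) * Complex.I * z)

/-- Jacobi theta function `ϑ₂(z|τ)`. -/
def th2 (z τ : ℂ) : ℂ :=
  ∑' n : ℤ,
    Complex.exp ((Real.pi : ℂ) * Complex.I * τ * ((n : ℂ) + 1/2) ^ 2 + (2 * (n : ℂ) + 1) * Complex.I * z)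

/-- Jacobi theta function `ϑ₃(z|τ)`. -/
def th3 (z τ : ℂ) : ℂ :=
  ∑' n : ℤ, Complex.exp ((Real.pi : ℂ) * Complex.I * τ * (n : ℂ) ^ 2 + 2 * (n : ℂ) * Complex.I * z)

/-- Jacobi theta function `ϑ₄(z|τ)`. -/
def th4 (z τ : ℂ) : ℂ :=
  ∑' n : ℤ, (-1 : ℂ) ^ n *
    Complex.exp ((Real.pi : ℂ) * Complex.I * τ * (n : ℂ) ^ 2 + 2 * (n : ℂ) * Complex.I * z)

/-- The crossing parameter `η = π/3`. -/
def ηc : ℂ := (Real.pi : ℂ) / 3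

/-- The elliptic nome `p = e^{iπτ}`. -/
def pnome (τ : ℂ) : ℂ := Complex.exp ((Real.pi : ℂ) * Complex.I * τ)

/-- `ζ = (ϑ₁(η,p²)/ϑ₄(η,p²))²`. -/
def zet (τ : ℂ) : ℂ := (th1 ηc (2 * τ) / th4 ηc (2 * τ)) ^ 2

/-- The nome `p` is real with `0 < p < 1`. -/
def preal (τ : ℂ) : Prop := (pnome τ).im = 0 ∧ 0 < (pnome τ).re ∧ (pnome τ).re < 1

/-- A tuple given by a list of prescribed entries, padded by zeros. -/
def padded {n : ℕ} (l : List ℂ) : Fin n → ℂ := fun j => l.getD (j : ℕ) 0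

/-- Extension of a tuple by a list of prescribed further entries (padded by zeros). -/
def extL {m n : ℕ} (w : Fin m → ℂ) (l : List ℂ) : Fin n → ℂ :=
  fun j => if h : (j : ℕ) < m then w ⟨j, h⟩ else l.getD ((j : ℕ) - m) 0

/-- First `k` entries of a `2k`-tuple. -/
def firstHalf {k : ℕ} (x : Fin (2 * k) → ℂ) : Fin k → ℂ :=
  fun i => x ⟨(i : ℕ), by have := i.2; omega⟩

/-- Last `k` entries of a `2k`-tuple. -/
def secondHalf {k : ℕ} (x : Fin (2 * k) → ℂ) : Fin k → ℂ :=
  fun i => x ⟨k + (i : ℕ), by have := i.2; omega⟩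

/-- `𝕙(x,y) = ϑ₁(x−y+η)ϑ₁(x−y−η)ϑ₁(x+y+η)ϑ₁(x+y−η)`. -/
def hh (τ x y : ℂ) : ℂ :=
  th1 (x - y + ηc) τ * th1 (x - y - ηc) τ * th1 (x + y + ηc) τ * th1 (x + y - ηc) τ

/-- `𝔻(x₁,…,x_k) = ∏_{i<j} ϑ₁(x_j−x_i)ϑ₁(x_j+x_i)`. -/
def vdTheta (τ : ℂ) {k : ℕ} (y : Fin k → ℂ) : ℂ :=
  ∏ i : Fin k, ∏ j : Fin k, if i < j then th1 (y j - y i) τ * th1 (y j + y i) τ else 1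

/-- The elliptic Tsuchiya determinant `ℍ_{2k}(x₁,…,x_k; x_{k+1},…,x_{2k})`. -/
def tsuchiya (τ : ℂ) (k : ℕ) (x : Fin (2 * k) → ℂ) : ℂ :=
  (∏ i : Fin k, ∏ j : Fin k, hh τ (firstHalf x i) (secondHalf x j))
    / (vdTheta τ (firstHalf x) * vdTheta τ (secondHalf x))
    * Matrix.det (Matrix.of fun i j : Fin k => (hh τ (firstHalf x i) (secondHalf x j))⁻¹)

/-- The expression defining the elliptic Tsuchiya determinant is well defined:
the Vandermonde-type denominators and the entries `𝕙(x_i,x_{j+k})` are nonzero. -/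
def tsuDefined (τ : ℂ) (k : ℕ) (x : Fin (2 * k) → ℂ) : Prop :=
  (∀ i j : Fin k, i ≠ j →
    th1 (firstHalf x j - firstHalf x i) τ ≠ 0 ∧ th1 (firstHalf x j + firstHalf x i) τ ≠ 0) ∧
  (∀ i j : Fin k, i ≠ j →
    th1 (secondHalf x j - secondHalf x i) τ ≠ 0 ∧ th1 (secondHalf x j + secondHalf x i) τ ≠ 0) ∧
  (∀ i j : Fin k, hh τ (firstHalf x i) (secondHalf x j) ≠ 0)

/-- `h(w,w') = 1 − (3+ζ²)ww' + (1−ζ²)ww'(w+w')`. -/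
def hpol (ζ w w' : ℂ) : ℂ := 1 - (3 + ζ ^ 2) * w * w' + (1 - ζ ^ 2) * w * w' * (w + w')

/-- Vandermonde product `Δ(w₁,…,w_k) = ∏_{i<j}(w_j − w_i)`. -/
def vdm {k : ℕ} (y : Fin k → ℂ) : ℂ :=
  ∏ i : Fin k, ∏ j : Fin k, if i < j then y j - y i else 1

/-- The determinant-ratio expression defining the polynomial `H_{2k}`. -/
def Hratio (ζ : ℂ) (k : ℕ) (w : Fin (2 * k) → ℂ) : ℂ :=
  (∏ i : Fin k, ∏ j : Fin k, hpol ζ (firstHalf w i) (secondHalf w j))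
    / (vdm (firstHalf w) * vdm (secondHalf w))
    * Matrix.det (Matrix.of fun i j : Fin k => (hpol ζ (firstHalf w i) (secondHalf w j))⁻¹)

/-- The expression `Hratio` is well defined at `w`. -/
def HratioDefined (ζ : ℂ) (k : ℕ) (w : Fin (2 * k) → ℂ) : Prop :=
  (∀ i j : Fin k, i ≠ j → firstHalf w i ≠ firstHalf w j) ∧
  (∀ i j : Fin k, i ≠ j → secondHalf w i ≠ secondHalf w j) ∧
  (∀ i j : Fin k, hpol ζ (firstHalf w i) (secondHalf w j) ≠ 0)

/-- `H` is the family of Rosengren–Zinn-Justin polynomials `H_{2k}` for parameter `ζ`: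
for each `k`, `H k` is a polynomial function of the `2k` variables agreeing with the
determinant-ratio formula wherever the latter is defined, and `H 0 = 1`. -/
def IsHFamily (ζ : ℂ) (H : (k : ℕ) → (Fin (2 * k) → ℂ) → ℂ) : Prop :=
  (∀ w, H 0 w = 1) ∧
  (∀ k : ℕ, ∃ P : MvPolynomial (Fin (2 * k)) ℂ, ∀ w, H k w = MvPolynomial.eval w P) ∧
  (∀ (k : ℕ) (w : Fin (2 * k) → ℂ), HratioDefined ζ k w → H k w = Hratio ζ k w)

/-- Vertex weight `a(u)`. -/
def av (τ u : ℂ) : ℂ := th4 (2*ηc) (2*τ) * th1 (u + 2*ηc) (2*τ) * th4 u (2*τ)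
/-- Vertex weight `b(u)`. -/
def bv (τ u : ℂ) : ℂ := th4 (2*ηc) (2*τ) * th4 (u + 2*ηc) (2*τ) * th1 u (2*τ)
/-- Vertex weight `c(u)`. -/
def cv (τ u : ℂ) : ℂ := th1 (2*ηc) (2*τ) * th4 (u + 2*ηc) (2*τ) * th4 u (2*τ)
/-- Vertex weight `d(u)`. -/
def dv (τ u : ℂ) : ℂ := th1 (2*ηc) (2*τ) * th1 (u + 2*ηc) (2*τ) * th1 u (2*τ)
/-- `r(u) = a(u) + b(u)`. -/
def rv (τ u : ℂ) : ℂ := av τ u + bv τ u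

/-- Entries of the `R`-matrix of the eight-vertex model, in the basis `{↑↑,↑↓,↓↑,↓↓}`
identified with `Fin 2 × Fin 2` (`↑ = 0`, `↓ = 1`). -/
def Rent (τ u : ℂ) (p q : Fin 2 × Fin 2) : ℂ :=
  if p = q then (if p.1 = p.2 then av τ u else bv τ u)
  else if q = (p.2, p.1) then cv τ u
  else if p.1 = p.2 ∧ q.1 = q.2 then dv τ u
  else 0

/-- Entries of `Ř(u) = 𝒫 R(u)`. -/
def Rcheckent (τ u : ℂ) (p q : Fin 2 × Fin 2) : ℂ := Rent τ u (p.2, p.1) q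

/-- The boundary vector `χ(x) ∈ ℂ²⊗ℂ²`. -/
def chiV (τ lam x : ℂ) : Fin 2 × Fin 2 → ℂ := fun p =>
  if p = ((0 : Fin 2), (1 : Fin 2)) then th1 (x + lam) (2*τ) * th4 (x - lam - 2*ηc) (2*τ)
  else if p = ((1 : Fin 2), (0 : Fin 2)) then th1 (x - lam - 2*ηc) (2*τ) * th4 (x + lam) (2*τ)
  else 0

/-- The boundary vector `χ̄(x) ∈ ℂ²⊗ℂ²`. -/
def chibarV (τ lam x : ℂ) : Fin 2 × Fin 2 → ℂ := fun p =>
  if p = ((0 : Fin 2), (0 : Fin 2)) then th1 (x + lam) (2*τ) * th1 (x - lam - 2*ηc) (2*τ)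
  else if p = ((1 : Fin 2), (1 : Fin 2)) then th4 (x - lam - 2*ηc) (2*τ) * th4 (x + lam) (2*τ)
  else 0

/-- A family `Ψ_n(u₁,…,u_{2n+1}) ∈ (ℂ²)^{⊗(2n+1)}`, represented by its components
with respect to spin configurations `α : Fin (2n+1) → Fin 2` (`↑ = 0`, `↓ = 1`). -/
abbrev PsiFam := (n : ℕ) → (Fin (2 * n + 1) → ℂ) → (Fin (2 * n + 1) → Fin 2) → ℂ

/-- The action of `Ř(u)` on tensor factors `i`, `j` of `(ℂ²)^{⊗L}`. -/
def applyRc (τ u : ℂ) {L : ℕ} (i j : Fin L) (ψ : (Fin L → Fin 2) → ℂ) :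
    (Fin L → Fin 2) → ℂ := fun α =>
  ∑ s : Fin 2, ∑ t : Fin 2,
    Rcheckent τ u (α i, α j) (s, t) * ψ (Function.update (Function.update α i s) j t)

/-- Spin flip. -/
def flipS : Fin 2 → Fin 2 := fun s => if s = 0 then 1 else 0

/-- Components of the singlet `s = ↑↓ − ↓↑`. -/
def singletC : Fin 2 → Fin 2 → ℂ := fun s t =>
  if s = 0 ∧ t = 1 then 1 else if s = 1 ∧ t = 0 then -1 else 0

/-- Delete the entries at positions `i`, `i+1` from a tuple. -/
def delTwo {α : Type*} {n : ℕ} (i : ℕ) (u : Fin (2 * (n + 1) + 1) → α) : Fin (2 * n + 1) → α :=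
  fun j => if _h : (j : ℕ) < i then u ⟨j, by have := j.2; omega⟩
           else u ⟨(j : ℕ) + 2, by have := j.2; omega⟩

/-- The components of `Ψ_n` are entire functions of each `u_i`. -/
def PsiEntire (Ψ : PsiFam) : Prop :=
  ∀ (n : ℕ) (u : Fin (2*n+1) → ℂ) (i : Fin (2*n+1)) (α : Fin (2*n+1) → Fin 2),
    Differentiable ℂ fun z => Ψ n (Function.update u i z) α

/-- (P1): the exchange relations. -/
def PsiP1 (τ : ℂ) (Ψ : PsiFam) : Prop :=
  ∀ (n : ℕ) (u : Fin (2*n+1) → ℂ) (i j : Fin (2*n+1)), (j : ℕ) = (i : ℕ) + 1 →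
    applyRc τ (u j - u i) i j (Ψ n u)
      = fun α => rv τ (u j - u i) * Ψ n (fun l => u (Equiv.swap i j l)) α

/-- (P2): local spin flips. -/
def PsiP2 (τ : ℂ) (Ψ : PsiFam) : Prop :=
  ∀ (n : ℕ) (u : Fin (2*n+1) → ℂ) (i : Fin (2*n+1)) (α : Fin (2*n+1) → Fin 2),
    Ψ n u (Function.update α i (flipS (α i)))
      = (-(pnome τ)) ^ n * Complex.exp (-Complex.I * ∑ j, (u j - u i))
        * Ψ n (Function.update u i (u i + Real.pi * τ)) α

/-- (P3): quasi-periodicity of `Ψ_n` in each `u_i`. -/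
def PsiP3 (τ : ℂ) (Ψ : PsiFam) : Prop :=
  ∀ (n : ℕ) (u : Fin (2*n+1) → ℂ) (i : Fin (2*n+1)),
    (Ψ n (Function.update u i (u i + Real.pi))
      = fun α => (∏ j ∈ Finset.univ.erase i, (if α j = 0 then (1:ℂ) else -1)) * Ψ n u α) ∧
    (Ψ n (Function.update u i (u i + 2 * Real.pi * τ))
      = fun α => (pnome τ ^ (4*n))⁻¹ *
          Complex.exp (-2 * Complex.I * ∑ j, (u i - u j)) * Ψ n u α)

/-- (P4): the wheel condition. -/
def PsiP4 (Ψ : PsiFam) : Prop :=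
  ∀ (n : ℕ) (u : Fin (2*n+1) → ℂ),
    (∃ i j k : Fin (2*n+1), i < j ∧ j < k ∧ u j = u i + 2*ηc ∧ u k = u i + 4*ηc) →
    Ψ n u = 0

/-- (P5): the reduction relations. -/
def PsiP5 (τ : ℂ) (Ψ : PsiFam) : Prop :=
  ∀ (n : ℕ) (u : Fin (2*(n+1)+1) → ℂ) (i : ℕ) (hi : i + 1 < 2*(n+1)+1),
    u ⟨i+1, hi⟩ = u ⟨i, by omega⟩ + 2*ηc →
    Ψ (n+1) u = fun α =>
      (∏ j ∈ (Finset.univ.erase (⟨i, by omega⟩ : Fin (2*(n+1)+1))).erase ⟨i+1, hi⟩,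
          th1 (u ⟨i, by omega⟩ - u j - 2*ηc) τ)
        * singletC (α ⟨i, by omega⟩) (α ⟨i+1, hi⟩)
        * Ψ n (delTwo i u) (delTwo i α)

/-- (P6): `Ψ₀ = ↑ + ↓`. -/
def PsiP6 (Ψ : PsiFam) : Prop := ∀ u α, Ψ 0 u α = 1

/-- The inhomogeneity parameters `(x₁,−x₁,…,x_n,−x_n,0)`. -/
def interleave {n : ℕ} (x : Fin n → ℂ) : Fin (2*n+1) → ℂ := fun j =>
  if h : (j : ℕ) < 2*n then
    (if (j : ℕ) % 2 = 0 then x ⟨(j:ℕ)/2, by omega⟩ else -x ⟨(j:ℕ)/2, by omega⟩)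
  else 0

/-- Components of `χ(x)`. -/
def chiC (τ lam x : ℂ) (s t : Fin 2) : ℂ :=
  if s = 0 ∧ t = 1 then th1 (x + lam) (2*τ) * th4 (x - lam - 2*ηc) (2*τ)
  else if s = 1 ∧ t = 0 then th1 (x - lam - 2*ηc) (2*τ) * th4 (x + lam) (2*τ)
  else 0

/-- Components of `χ̄(x)`. -/
def chibarC (τ lam x : ℂ) (s t : Fin 2) : ℂ :=
  if s = 0 ∧ t = 0 then th1 (x + lam) (2*τ) * th1 (x - lam - 2*ηc) (2*τ)
  else if s = 1 ∧ t = 1 then th4 (x - lam - 2*ηc) (2*τ) * th4 (x + lam) (2*τ)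
  else 0

/-- The scalar product `Z_n(x₁,…,x_n) = ⟨ξ_n(x₁,…,x_n), Ψ_n(x₁,−x₁,…,x_n,−x_n,0)⟩`. -/
def Zfun (τ lam : ℂ) (Ψ : PsiFam) (n : ℕ) (x : Fin n → ℂ) : ℂ :=
  ∑ α : Fin (2*n+1) → Fin 2,
    (∏ m : Fin n, chiC τ lam (x m)
        (α ⟨2*(m:ℕ), by have := m.2; omega⟩) (α ⟨2*(m:ℕ)+1, by have := m.2; omega⟩))
      * (if α ⟨2*n, by omega⟩ = 0 then (1:ℂ) else 0)
      * Ψ n (interleave x) α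

/-- The scalar product `Z̄_n^±(x₁,…,x_n)`, with `ε = ±1`. -/
def Zbarfun (τ lam ε : ℂ) (Ψ : PsiFam) (n : ℕ) (x : Fin n → ℂ) : ℂ :=
  ∑ α : Fin (2*n+1) → Fin 2,
    (∏ m : Fin n, chibarC τ lam (x m)
        (α ⟨2*(m:ℕ), by have := m.2; omega⟩) (α ⟨2*(m:ℕ)+1, by have := m.2; omega⟩))
      * (if α ⟨2*n, by omega⟩ = 0 then (1:ℂ) else ε)
      * Ψ n (interleave x) α

/-- The normalisation constant `𝒩_n`. -/
def Ncoef (τ : ℂ) (n : ℕ) : ℂ :=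
  (-1 : ℂ) ^ ((n+1)/2) * (th1 ηc τ ^ (n^2))⁻¹ * (th4 0 (2*τ) / th4 ηc (2*τ)) ^ (n*(n+1)/2)

/-- The vector `ψ_n = 𝒩_n Ψ_n(0,…,0)`. -/
def psiH (τ : ℂ) (Ψ : PsiFam) (n : ℕ) (α : Fin (2*n+1) → Fin 2) : ℂ :=
  Ncoef τ n * Ψ n (fun _ => 0) α

/-- The scalar product `S_n(μ) = ((⟨↑↓| + μ⟨↓↑|)^{⊗n} ⊗ ⟨↑|) ψ_n`. -/
def Sfun (τ : ℂ) (Ψ : PsiFam) (n : ℕ) (μ : ℂ) : ℂ :=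
  ∑ α : Fin (2*n+1) → Fin 2,
    (∏ m : Fin n,
      (if α ⟨2*(m:ℕ), by have := m.2; omega⟩ = 0 ∧ α ⟨2*(m:ℕ)+1, by have := m.2; omega⟩ = 1
        then (1:ℂ)
       else if α ⟨2*(m:ℕ), by have := m.2; omega⟩ = 1 ∧ α ⟨2*(m:ℕ)+1, by have := m.2; omega⟩ = 0
        then μ
       else 0))
      * (if α ⟨2*n, by omega⟩ = 0 then (1:ℂ) else 0) * psiH τ Ψ n α

/-- The scalar product `S̄_n^±(ν) = ((⟨↑↑| + ν⟨↓↓|)^{⊗n} ⊗ (⟨↑| ± ⟨↓|)) ψ_n`, with `ε = ±1`. -/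
def Sbarfun (τ ε : ℂ) (Ψ : PsiFam) (n : ℕ) (ν : ℂ) : ℂ :=
  ∑ α : Fin (2*n+1) → Fin 2,
    (∏ m : Fin n,
      (if α ⟨2*(m:ℕ), by have := m.2; omega⟩ = 0 ∧ α ⟨2*(m:ℕ)+1, by have := m.2; omega⟩ = 0
        then (1:ℂ)
       else if α ⟨2*(m:ℕ), by have := m.2; omega⟩ = 1 ∧ α ⟨2*(m:ℕ)+1, by have := m.2; omega⟩ = 1
        then ν
       else 0))
      * (if α ⟨2*n, by omega⟩ = 0 then (1:ℂ) else ε) * psiH τ Ψ n α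

/-- The alternating spin configuration `↑↓↑↓⋯↑`. -/
def altConf {L : ℕ} : Fin L → Fin 2 := fun j => if (j : ℕ) % 2 = 0 then 0 else 1

/-- The fully polarised spin configuration `↓⋯↓`. -/
def downConf {L : ℕ} : Fin L → Fin 2 := fun _ => 1

/-- The spin configuration `↑⋯↑↓` with a single `↓` at the last site. -/
def lastDownConf {n : ℕ} : Fin (2*n+1) → Fin 2 := fun j => if (j : ℕ) = 2*n then 1 else 0

/-- `J₂ = −1/2`. -/
def J2c : ℂ := -(1/2)
/-- `J₃ = 1/(1+ζ)`. -/
def J3c (ζ : ℂ) : ℂ := 1/(1+ζ)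
/-- `J₄ = 1/(1−ζ)`. -/
def J4c (ζ : ℂ) : ℂ := 1/(1-ζ)
/-- `μ̄ = (μ−1)²/((ζ²−1)μ)`. -/
def mubar (ζ μ : ℂ) : ℂ := (μ - 1)^2 / ((ζ^2 - 1)*μ)
/-- `ν̄ = (ν−ζ)(νζ−1)/((ζ²−1)ν)`. -/
def nubar (ζ ν : ℂ) : ℂ := (ν - ζ)*(ν*ζ - 1) / ((ζ^2 - 1)*ν)

/-- The elliptic function `w(x)`. -/
def wfun (τ x : ℂ) : ℂ :=
  th4 ηc (2*τ) / th4 0 (2*τ) * th1 x τ ^ 2 / (th1 (x - ηc) τ * th1 (x + ηc) τ)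

/-- `β₂ = η + π/2`. -/
def β2c : ℂ := ηc + (Real.pi : ℂ)/2
/-- `β₃ = η + π/2 + πτ/2`. -/
def β3c (τ : ℂ) : ℂ := ηc + (Real.pi : ℂ)/2 + (Real.pi : ℂ)*τ/2
/-- `β₄ = η + πτ/2`. -/
def β4c (τ : ℂ) : ℂ := ηc + (Real.pi : ℂ)*τ/2

/-- `f` is an (even) theta function of degree `m`, nome `p = e^{iπτ}` and norm `0`
with respect to each of its variables. -/
def ThetaLike (τ : ℂ) (m : ℕ) {n : ℕ} (X : (Fin n → ℂ) → ℂ) : Prop :=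
  ∀ (x : Fin n → ℂ) (i : Fin n),
    Differentiable ℂ (fun z => X (Function.update x i z)) ∧
    (∀ z, X (Function.update x i (z + Real.pi)) = X (Function.update x i z)) ∧
    (∀ z, X (Function.update x i (z + Real.pi * τ))
        = ((-(pnome τ)) ^ m)⁻¹ * Complex.exp (-2 * Complex.I * ((m : ℂ) * z))
            * X (Function.update x i z)) ∧
    (∀ z, X (Function.update x i (-z)) = X (Function.update x i z))

/-
`ϑ₁(x - y) ϑ₁(x + y)` is a `2 × 2` minor `A x * B y - B x * A y`, with `A` and `B` theta functions
of nome `p²`. Multiplying it by `hh` at `η = π / 3` gives `F (x - y) * F (x + y)`, where `F z` is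
the product of `ϑ₁` at `z`, `z + π / 3` and `z - π / 3`. Since `F z` is a multiple of `ϑ₁(3 * z)` of
nome `p³`, this is again a minor `C x * D y - D x * C y`, so that `1 / hh` is a quotient of two
minors. By Lagrange interpolation its determinant becomes the `2k × 2k` determinant with rows
`A x_r * (C x_r)^m * (D x_r)^(k - 1 - m)`, `B x_r * (C x_r)^m * (D x_r)^(k - 1 - m)`, which is
antisymmetric in all the `x_r`. The prefactors turn `tsuchiya` into the quotient of this determinant
by the Vandermonde-type product of all `2k` variables, also antisymmetric. This holds where all
the minors are nonzero, a dense set, and the symmetry extends to the domain by continuity.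
-/

lemma intervalIntegral_add_eq_of_periodic {g : ℂ → ℂ} (hg : Differentiable ℂ g)
    (hper : Function.Periodic g 1) (w : ℂ) :
    ∫ t in (0 : ℝ)..1, g (t + w) = ∫ t in (0 : ℝ)..1, g t := by
  obtain ⟨G, hG⟩ := hg.isExactOn_univ
  replace hG (z : ℂ) : HasDerivAt G (g z) z := hG z (Set.mem_univ z)
  have integral_eq (v : ℂ) : ∫ t in (0 : ℝ)..1, g (t + v) = G (v + 1) - G v := by
    have hderiv (t : ℝ) : HasDerivAt (fun s : ℝ ↦ G (s + v)) (g (t + v)) t :=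
      ((hG (t + v)).comp_add_const (t : ℂ) v).comp_ofReal
    have hint : IntervalIntegrable (fun t : ℝ ↦ g (t + v)) MeasureTheory.volume 0 1 :=
      (hg.continuous.comp (by fun_prop)).intervalIntegrable 0 1
    simpa [add_comm] using
      intervalIntegral.integral_eq_sub_of_hasDerivAt (fun t _ ↦ hderiv t) hint
  have hderiv_zero (v : ℂ) : HasDerivAt (fun v ↦ G (v + 1) - G v) 0 v := by
    simpa [hper v] using HasDerivAt.fun_sub ((hG (v + 1)).comp_add_const v 1) (hG v)
  have hconst := is_const_of_deriv_eq_zero (fun v ↦ (hderiv_zero v).differentiableAt)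
    (fun v ↦ (hderiv_zero v).deriv) w 0
  simpa [integral_eq, hconst] using (integral_eq 0).symm

lemma eq_of_forall_ofReal_eq {f g : ℂ → ℂ} (hf : Differentiable ℂ f) (hg : Differentiable ℂ g)
    (h : ∀ t : ℝ, f t = g t) : f = g := by
  have hofReal : Filter.Tendsto ((↑) : ℝ → ℂ) (nhdsWithin 0 {0}ᶜ) (nhdsWithin 0 {0}ᶜ) :=
    (continuous_ofReal.tendsto' 0 0 ofReal_zero).inf
      (Filter.tendsto_principal_principal.mpr fun t ht ↦ by simpa using ht)
  exact (analyticOnNhd_univ_iff_differentiable.mpr hf).eq_of_frequently_eq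
    (analyticOnNhd_univ_iff_differentiable.mpr hg) (hofReal.frequently (.of_forall h))

section Uniqueness

variable {f : ℂ → ℂ} {τ : ℂ}

lemma intervalIntegral_exp_mul_eq (hf : Differentiable ℂ f) (hone : Function.Periodic f 1)
    (hτ : ∀ z, f (z + τ) = cexp (-Real.pi * I * (τ + 2 * z)) * f z) (n : ℤ) :
    ∫ t in (0 : ℝ)..1, cexp (-2 * Real.pi * I * n * t) * f t =
      cexp (Real.pi * I * τ * n ^ 2) * ∫ t in (0 : ℝ)..1, f t := by
  set c : ℤ → ℂ := fun n ↦ ∫ t in (0 : ℝ)..1, cexp (-2 * Real.pi * I * n * t) * f t with hc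
  have hper (n : ℤ) : Function.Periodic (fun z ↦ cexp (-2 * Real.pi * I * n * z) * f z) 1 := by
    intro z
    have : cexp (-2 * Real.pi * I * n * (z + 1)) = cexp (-2 * Real.pi * I * n * z) := by
      rw [Complex.exp_eq_exp_iff_exists_int]
      exact ⟨-n, by push_cast; ring⟩
    simp only [hone z, this]
  have hrec (n : ℤ) : c n = cexp (-Real.pi * I * τ * (2 * n + 1)) * c (n + 1) := by
    simp only [hc]
    rw [← intervalIntegral.integral_const_mul,
      ← intervalIntegral_add_eq_of_periodic (by fun_prop) (hper n) τ]
    refine intervalIntegral.integral_congr fun t _ ↦ ?_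
    simp only [hτ, ← mul_assoc, ← Complex.exp_add]
    congr 2
    push_cast
    ring
  have hperiodic : Function.Periodic (fun n : ℤ ↦ cexp (-Real.pi * I * τ * n ^ 2) * c n) 1 := by
    intro n
    simp only [hrec n, ← mul_assoc, ← Complex.exp_add]
    congr 2
    push_cast
    ring
  have hn : cexp (-Real.pi * I * τ * n ^ 2) * c n = c 0 := by
    simpa using hperiodic.int_mul_eq n
  have hc0 : c 0 = ∫ t in (0 : ℝ)..1, f t := by simp [hc]
  rw [← hc0, ← hn, ← mul_assoc, ← Complex.exp_add]
  simp [hc]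

theorem exists_eq_mul_jacobiTheta₂ (hτ : 0 < τ.im) (hf : Differentiable ℂ f)
    (hone : Function.Periodic f 1)
    (hquasi : ∀ z, f (z + τ) = cexp (-Real.pi * I * (τ + 2 * z)) * f z) :
    ∃ K, ∀ z, f z = K * jacobiTheta₂ z τ := by
  set K : ℂ := ∫ t in (0 : ℝ)..1, f t
  have honeReal : Function.Periodic (fun t : ℝ ↦ f t) 1 := fun t ↦ by simpa using hone t
  let F : C(AddCircle (1 : ℝ), ℂ) :=
    ⟨honeReal.lift, continuous_coinduced_dom.mpr (hf.continuous.comp continuous_ofReal)⟩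
  have hcoeff (n : ℤ) : fourierCoeff F n = K * cexp (Real.pi * I * τ * n ^ 2) := by
    rw [fourierCoeff_eq_intervalIntegral _ n 0, mul_comm K,
      ← intervalIntegral_exp_mul_eq hf hone hquasi n]
    simp only [fourier_coe_apply, F]
    simp [mul_assoc, mul_left_comm]
  have hterm (n : ℤ) (t : ℝ) :
      fourierCoeff F n * fourier n (t : AddCircle (1 : ℝ)) = K * jacobiTheta₂_term n t τ := by
    rw [hcoeff, fourier_coe_apply, mul_assoc, ← Complex.exp_add, jacobiTheta₂_term]
    congr 2
    push_cast
    ring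
  have hsummable : Summable (fourierCoeff F) := by
    simpa [fourier_eval_zero] using (((summable_jacobiTheta₂_term_iff 0 τ).mpr hτ).mul_left K).congr
      fun n ↦ (by simpa using (hterm n 0).symm)
  have hreal (t : ℝ) : f t = K * jacobiTheta₂ t τ := by
    have h := has_pointwise_sum_fourier_series_of_summable hsummable t
    simp only [smul_eq_mul, hterm] at h
    exact h.unique ((hasSum_jacobiTheta₂_term t hτ).mul_left K)
  exact ⟨K, congrFun (eq_of_forall_ofReal_eq hf
    (fun z ↦ (differentiableAt_jacobiTheta₂_fst z hτ).const_mul K) hreal)⟩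

end Uniqueness

section Theta

lemma th1_eq_jacobiTheta₂ (z τ : ℂ) :
    th1 z τ = -I * cexp (Real.pi * I * τ / 4 + I * z) *
      jacobiTheta₂ (z / Real.pi + τ / 2 + 1 / 2) τ := by
  have hpi : (Real.pi : ℂ) ≠ 0 := by exact_mod_cast Real.pi_ne_zero
  rw [th1, jacobiTheta₂, ← tsum_mul_left, ← tsum_mul_left]
  refine tsum_congr fun n ↦ ?_
  rw [jacobiTheta₂_term, ← Complex.exp_pi_mul_I, ← Complex.exp_int_mul, ← Complex.exp_add,
    mul_assoc (-I) (cexp _) (cexp _), ← Complex.exp_add]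
  congr 2
  field_simp
  ring

lemma th1_add_pi (z τ : ℂ) : th1 (z + Real.pi) τ = -th1 z τ := by
  have hpi : (Real.pi : ℂ) ≠ 0 := by exact_mod_cast Real.pi_ne_zero
  have harg : (z + Real.pi) / Real.pi + τ / 2 + 1 / 2 = z / Real.pi + τ / 2 + 1 / 2 + 1 := by
    field_simp
    ring
  have hexp : cexp (Real.pi * I * τ / 4 + I * (z + Real.pi)) =
      -cexp (Real.pi * I * τ / 4 + I * z) := by
    rw [mul_add, ← add_assoc, mul_comm I (Real.pi : ℂ), Complex.exp_add_pi_mul_I]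
  rw [th1_eq_jacobiTheta₂, th1_eq_jacobiTheta₂, harg, jacobiTheta₂_add_left, hexp]
  ring

lemma th1_add_pi_mul (z τ : ℂ) :
    th1 (z + Real.pi * τ) τ = -cexp (-Real.pi * I * τ - 2 * I * z) * th1 z τ := by
  have hpi : (Real.pi : ℂ) ≠ 0 := by exact_mod_cast Real.pi_ne_zero
  have harg : (z + Real.pi * τ) / Real.pi + τ / 2 + 1 / 2 = z / Real.pi + τ / 2 + 1 / 2 + τ := by
    field_simp
    ring
  have hexp : cexp (Real.pi * I * τ / 4 + I * (z + Real.pi * τ)) *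
        cexp (-Real.pi * I * (τ + 2 * (z / Real.pi + τ / 2 + 1 / 2))) =
      -(cexp (-Real.pi * I * τ - 2 * I * z) * cexp (Real.pi * I * τ / 4 + I * z)) := by
    rw [← Complex.exp_add, ← Complex.exp_add, ← Complex.exp_sub_pi_mul_I]
    congr 1
    field_simp
    ring
  rw [th1_eq_jacobiTheta₂, th1_eq_jacobiTheta₂, harg, jacobiTheta₂_add_left']
  linear_combination -I * jacobiTheta₂ (z / Real.pi + τ / 2 + 1 / 2) τ * hexp

variable {τ : ℂ}

lemma differentiable_th1 (hτ : 0 < τ.im) : Differentiable ℂ (fun z ↦ th1 z τ) := by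
  have h : Differentiable ℂ (fun z ↦ jacobiTheta₂ z τ) :=
    fun z ↦ differentiableAt_jacobiTheta₂_fst z hτ
  simp only [th1_eq_jacobiTheta₂]
  fun_prop

theorem exists_eq_mul_th1 {f : ℂ → ℂ} (hτ : 0 < τ.im) (hf : Differentiable ℂ f)
    (hpi : Function.Antiperiodic f Real.pi)
    (hquasi : ∀ z, f (z + Real.pi * τ) = -cexp (-Real.pi * I * τ - 2 * I * z) * f z) :
    ∃ K, ∀ z, f z = K * th1 z τ := by
  have hpi0 : (Real.pi : ℂ) ≠ 0 := by exact_mod_cast Real.pi_ne_zero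
  set s : ℂ := τ / 2 + 1 / 2
  set g : ℂ → ℂ := fun z ↦ cexp (-I * (Real.pi * (z - s))) * f (Real.pi * (z - s)) with hg
  have hperiodic : Function.Periodic g 1 := fun z ↦ by
    have harg : Real.pi * (z + 1 - s) = Real.pi * (z - s) + Real.pi := by ring
    simp only [hg]
    rw [harg, hpi, mul_add, neg_mul I Real.pi, mul_comm I Real.pi, ← sub_eq_add_neg,
      Complex.exp_sub_pi_mul_I, neg_mul_neg]
  have hquasi' (z : ℂ) : g (z + τ) = cexp (-Real.pi * I * (τ + 2 * z)) * g z := by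
    have harg : Real.pi * (z + τ - s) = Real.pi * (z - s) + Real.pi * τ := by ring
    simp only [hg]
    have hexp : cexp (-I * (Real.pi * (z - s) + Real.pi * τ)) *
        -cexp (-Real.pi * I * τ - 2 * I * (Real.pi * (z - s))) =
        cexp (-Real.pi * I * (τ + 2 * z)) * cexp (-I * (Real.pi * (z - s))) := by
      rw [mul_neg, ← Complex.exp_add, ← Complex.exp_add, ← Complex.exp_sub_pi_mul_I]
      congr 1
      simp only [s]
      ring
    rw [harg, hquasi]
    linear_combination f (Real.pi * (z - s)) * hexp
  obtain ⟨K, hK⟩ := exists_eq_mul_jacobiTheta₂ hτ (by fun_prop) hperiodic hquasi'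
  refine ⟨K * I * cexp (-(Real.pi * I * τ / 4)), fun z ↦ ?_⟩
  have hz : cexp (-I * z) * f z = K * jacobiTheta₂ (z / Real.pi + τ / 2 + 1 / 2) τ := by
    have harg : Real.pi * (z / Real.pi + s - s) = z := by rw [add_sub_cancel_right]; field_simp
    rw [add_assoc, ← hK (z / Real.pi + s)]
    simp only [hg, harg]
  have hexp : cexp (-(Real.pi * I * τ / 4)) * cexp (Real.pi * I * τ / 4 + I * z) =
      cexp (I * z) := by
    rw [← Complex.exp_add, neg_add_cancel_left]
  have hinv : cexp (I * z) * cexp (-I * z) = 1 := by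
    rw [← Complex.exp_add, neg_mul, add_neg_cancel, Complex.exp_zero]
  rw [th1_eq_jacobiTheta₂]
  linear_combination cexp (I * z) * hz - f z * hinv
    - K * jacobiTheta₂ (z / Real.pi + τ / 2 + 1 / 2) τ * (-I * I * hexp - cexp (I * z) * I_sq)

/-- The product of the three translates of `ϑ₁` by multiples of `π / 3`, proportional to the theta
function `ϑ₁(3 * z)` of nome `p³`; the factors of `hh`, completed by `ϑ₁(x - y) ϑ₁(x + y)`, group
into two such products. -/
def th1Third (τ z : ℂ) : ℂ := th1 z τ * th1 (z + ηc) τ * th1 (z - ηc) τ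

lemma differentiable_th1Third (hτ : 0 < τ.im) : Differentiable ℂ (th1Third τ) := by
  have h := differentiable_th1 hτ
  unfold th1Third
  fun_prop

lemma th1Third_add_third_pi (z : ℂ) : th1Third τ (z + ηc) = -th1Third τ z := by
  have hper : th1 (z + ηc + ηc) τ = -th1 (z - ηc) τ := by
    rw [← th1_add_pi, ηc]
    congr 1
    ring
  rw [th1Third, th1Third, hper, add_sub_cancel_right]
  ring

lemma th1Third_add_pi_mul (z : ℂ) :
    th1Third τ (z + Real.pi * τ) = -cexp (-3 * Real.pi * I * τ - 6 * I * z) * th1Third τ z := by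
  have hexp : cexp (-Real.pi * I * τ - 2 * I * z) * cexp (-Real.pi * I * τ - 2 * I * (z + ηc)) *
      cexp (-Real.pi * I * τ - 2 * I * (z - ηc)) = cexp (-3 * Real.pi * I * τ - 6 * I * z) := by
    rw [← Complex.exp_add, ← Complex.exp_add]
    congr 1
    ring
  simp only [th1Third, add_right_comm z, add_sub_right_comm z, th1_add_pi_mul]
  rw [← hexp]
  ring

theorem exists_th1Third_eq_mul_th1 (hτ : 0 < τ.im) :
    ∃ K, ∀ z, th1Third τ z = K * th1 (3 * z) (3 * τ) := by
  have hdiff : Differentiable ℂ fun z ↦ th1Third τ (z / 3) :=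
    (differentiable_th1Third hτ).comp (by fun_prop)
  have hpi : Function.Antiperiodic (fun z ↦ th1Third τ (z / 3)) Real.pi := fun z ↦ by
    simpa only [ηc, add_div] using th1Third_add_third_pi (τ := τ) (z / 3)
  have hquasi (z : ℂ) : th1Third τ ((z + Real.pi * (3 * τ)) / 3) =
      -cexp (-Real.pi * I * (3 * τ) - 2 * I * z) * th1Third τ (z / 3) := by
    have harg : (z + Real.pi * (3 * τ)) / 3 = z / 3 + Real.pi * τ := by ring
    rw [harg, th1Third_add_pi_mul]
    ring_nf
  obtain ⟨K, hK⟩ := exists_eq_mul_th1 (τ := 3 * τ) (by simpa using hτ) hdiff hpi hquasi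
  exact ⟨K, fun z ↦ by simpa using hK (3 * z)⟩

/-- The change of summation indices `(j, a, b) ↦ (a - b - j, a + b)` separating the pairs of
integers by the parity `j` of their sum. -/
def parityEquiv : Fin 2 × (ℤ × ℤ) ≃ ℤ × ℤ where
  toFun t := (t.2.1 - t.2.2 - (t.1 : ℕ), t.2.1 + t.2.2)
  invFun u := (⟨((u.1 + u.2) % 2).toNat, by omega⟩,
    ((u.1 + u.2 + 1) / 2, u.2 - (u.1 + u.2 + 1) / 2))
  left_inv := by
    rintro ⟨j, a, b⟩
    ext <;> simp only <;> omega
  right_inv := by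
    rintro ⟨n, m⟩
    ext <;> simp only <;> omega

lemma summable_th2 (hτ : 0 < τ.im) (z : ℂ) : Summable fun n : ℤ ↦
    cexp (Real.pi * I * τ * (n + 1 / 2) ^ 2 + (2 * n + 1) * I * z) := by
  refine (((summable_jacobiTheta₂_term_iff (z / Real.pi + τ / 2) τ).mpr hτ).mul_left
    (cexp (Real.pi * I * τ / 4 + I * z))).congr fun n ↦ ?_
  rw [jacobiTheta₂_term, ← Complex.exp_add]
  congr 1
  have hpi : (Real.pi : ℂ) ≠ 0 := by exact_mod_cast Real.pi_ne_zero
  field_simp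
  ring

lemma summable_th3 (hτ : 0 < τ.im) (z : ℂ) : Summable fun n : ℤ ↦
    cexp (Real.pi * I * τ * n ^ 2 + 2 * n * I * z) := by
  refine ((summable_jacobiTheta₂_term_iff (z / Real.pi) τ).mpr hτ).congr fun n ↦ ?_
  rw [jacobiTheta₂_term]
  congr 1
  have hpi : (Real.pi : ℂ) ≠ 0 := by exact_mod_cast Real.pi_ne_zero
  field_simp
  ring

lemma summable_th1 (hτ : 0 < τ.im) (z : ℂ) : Summable fun n : ℤ ↦ (-1 : ℂ) ^ n *
    cexp (Real.pi * I * τ * (n + 1 / 2) ^ 2 + (2 * n + 1) * I * z) :=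
  .of_norm <| (summable_th2 hτ z).norm.congr fun n ↦ by simp

theorem th1_sub_mul_th1_add (hτ : 0 < τ.im) (x y : ℂ) :
    th1 (x - y) τ * th1 (x + y) τ =
      th3 (2 * x) (2 * τ) * th2 (2 * y) (2 * τ) - th2 (2 * x) (2 * τ) * th3 (2 * y) (2 * τ) := by
  have hτ₂ : 0 < (2 * τ).im := by simpa using hτ
  have hnorm₁ (z : ℂ) := (summable_th1 hτ z).norm
  have hnorm₂ (z : ℂ) := (summable_th2 hτ₂ z).norm
  have hnorm₃ (z : ℂ) := (summable_th3 hτ₂ z).norm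
  have hprod := parityEquiv.summable_iff.mpr
    (summable_mul_of_summable_norm (hnorm₁ (x - y)) (hnorm₁ (x + y)))
  rw [Function.comp_def] at hprod
  rw [th1, th1, mul_mul_mul_comm, neg_mul_neg, I_mul_I,
    tsum_mul_tsum_of_summable_norm (hnorm₁ _) (hnorm₁ _), ← parityEquiv.tsum_eq,
    hprod.tsum_prod, tsum_fintype, Fin.sum_univ_two, th2, th3, th2, th3,
    tsum_mul_tsum_of_summable_norm (hnorm₃ _) (hnorm₂ _),
    tsum_mul_tsum_of_summable_norm (hnorm₂ _) (hnorm₃ _)]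
  have hsign (n m : ℤ) (u v : ℂ) :
      (-1) ^ n * cexp u * ((-1) ^ m * cexp v) = (-1) ^ (n + m) * cexp (u + v) := by
    rw [zpow_add₀ (by norm_num), Complex.exp_add]
    ring
  have heven (t : ℤ × ℤ) : (-1 : ℂ) ^ (t.1 - t.2 + (t.1 + t.2)) = 1 :=
    Even.neg_one_zpow ⟨t.1, by ring⟩
  have hodd (t : ℤ × ℤ) : (-1 : ℂ) ^ (t.1 - t.2 - 1 + (t.1 + t.2)) = -1 :=
    Odd.neg_one_zpow ⟨t.1 - 1, by ring⟩
  simp only [parityEquiv, Equiv.coe_fn_mk, hsign, Fin.val_zero, Fin.val_one, Nat.cast_zero,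
    Nat.cast_one, sub_zero, heven, hodd, one_mul, neg_one_mul, tsum_neg, ← Complex.exp_add]
  rw [neg_add_rev, neg_neg, ← sub_eq_add_neg]
  refine congrArg₂ (· - ·) (tsum_congr fun t ↦ ?_) (tsum_congr fun t ↦ ?_) <;>
  · push_cast
    ring_nf

end Theta

section Determinants

variable {R n : Type*} [CommRing R] [Fintype n] [DecidableEq n]

lemma det_fromBlocks_mul_det_of_commute (A B : Matrix n n R) {C D : Matrix n n R}
    (h : Commute C D) :
    (Matrix.fromBlocks A B C D).det * D.det = (A * D - B * C).det * D.det := by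
  have hmul : Matrix.fromBlocks A B C D * Matrix.fromBlocks D 0 (-C) 1 =
      Matrix.fromBlocks (A * D - B * C) B 0 D := by
    simp [Matrix.fromBlocks_multiply, h.eq, sub_eq_add_neg]
  simpa using congrArg Matrix.det hmul

open Polynomial in
-- Silvester's trick: replacing `D` by `D + X` makes its determinant monic, hence cancellable.
theorem det_fromBlocks_of_commute (A B : Matrix n n R) {C D : Matrix n n R} (h : Commute C D) :
    (Matrix.fromBlocks A B C D).det = (A * D - B * C).det := by
  let ι : Matrix n n R →+* Matrix n n R[X] := Polynomial.C.mapMatrix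
  let DX : Matrix n n R[X] := (-D).charmatrix
  have hDX : DX = Matrix.scalar n X + ι D := by
    simp [DX, ι, Matrix.charmatrix, Matrix.map_neg]
  have hcomm : Commute (ι C) DX := by
    rw [hDX]
    exact (Matrix.scalar_commute _ (fun _ ↦ Commute.all _ _) _).symm.add_right (h.map ι)
  have hpoly : (Matrix.fromBlocks (ι A) (ι B) (ι C) DX).det = (ι A * DX - ι B * ι C).det :=
    (Matrix.charpoly_monic (-D)).isRegular.right
      (det_fromBlocks_mul_det_of_commute (ι A) (ι B) hcomm)
  have hι (M : Matrix n n R) : (evalRingHom 0).mapMatrix (ι M) = M := by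
    ext; simp [ι]
  have hDX0 : (evalRingHom 0).mapMatrix DX = D := by
    rw [hDX, map_add, hι]
    ext i j
    simp [Matrix.diagonal, apply_ite]
  have hblocks : (evalRingHom 0).mapMatrix (Matrix.fromBlocks (ι A) (ι B) (ι C) DX) =
      Matrix.fromBlocks A B C D := by
    simp only [RingHom.mapMatrix_apply] at hι hDX0 ⊢
    rw [Matrix.fromBlocks_map, hι, hι, hι, hDX0]
  have heval := congrArg (evalRingHom (0 : R)) hpoly
  rwa [RingHom.map_det, RingHom.map_det, hblocks, map_sub, map_mul, map_mul, hι, hι, hι, hDX0]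
    at heval

end Determinants

section DoubleVandermonde

variable {R ι : Type*} [CommRing R] {n : ℕ}

/-- The `2 × 2` minor `u i * v j - v i * u j`, the homogeneous form of a difference of `u / v`. -/
def wedge (u v : ι → R) (i j : ι) : R := u i * v j - v i * u j

/-- The coefficients of the homogeneous Lagrange polynomials `∏ l ≠ j, (X * d l - Y * c l)`: the
entry at `(m, j)` is the coefficient of `X ^ m * Y ^ (n - 1 - m)`. -/
def lagrangeCoeff (c d : Fin n → R) : Matrix (Fin n) (Fin n) R :=
  Matrix.of fun m j ↦ ∑ t ∈ (Finset.univ.erase j).powersetCard m,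
    (∏ l ∈ t, d l) * ∏ l ∈ Finset.univ.erase j \ t, -c l

lemma rectVandermonde_mul_lagrangeCoeff (u v : ι → R) (c d : Fin n → R) (i : ι) (j : Fin n) :
    (Matrix.rectVandermonde u v n * lagrangeCoeff c d) i j =
      ∏ l ∈ Finset.univ.erase j, (u i * d l - v i * c l) := by
  have hcard : (Finset.univ.erase j).card + 1 = n := by simp; have := j.2; omega
  simp only [sub_eq_add_neg, ← mul_neg]
  rw [Finset.prod_add, Finset.sum_powerset, hcard, ← Fin.sum_univ_eq_sum_range
    (fun m ↦ ∑ t ∈ (Finset.univ.erase j).powersetCard m, _), Matrix.mul_apply]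
  refine Finset.sum_congr rfl fun m _ ↦ ?_
  rw [Matrix.rectVandermonde_apply, lagrangeCoeff, Matrix.of_apply, Finset.mul_sum]
  refine Finset.sum_congr rfl fun t ht ↦ ?_
  obtain ⟨hsub, ht⟩ := Finset.mem_powersetCard.mp ht
  have hsdiff : (Finset.univ.erase j \ t).card = (m.rev : ℕ) := by
    rw [Finset.card_sdiff_of_subset hsub, ht, Fin.val_rev]
    omega
  rw [Finset.prod_mul_distrib, Finset.prod_mul_distrib, Finset.prod_const, Finset.prod_const,
    ht, hsdiff]
  ring

/-- The matrix with rows `(a i * c i ^ m * d i ^ (n - 1 - m) | b i * c i ^ m * d i ^ (n - 1 - m))`,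
a Vandermonde row taken twice, with the weights `a i` and `b i`. -/
def doubleVandermonde (n : ℕ) (a b c d : ι → R) : Matrix ι (Fin n ⊕ Fin n) R :=
  Matrix.of fun i ↦ Sum.elim (fun m ↦ a i * Matrix.rectVandermonde c d n i m)
    (fun m ↦ b i * Matrix.rectVandermonde c d n i m)

lemma doubleVandermonde_eq_fromBlocks (a b c d : Fin n ⊕ Fin n → R) :
    doubleVandermonde n a b c d = Matrix.fromBlocks
      (Matrix.diagonal (a ∘ Sum.inl) * Matrix.projVandermonde (c ∘ Sum.inl) (d ∘ Sum.inl))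
      (Matrix.diagonal (b ∘ Sum.inl) * Matrix.projVandermonde (c ∘ Sum.inl) (d ∘ Sum.inl))
      (Matrix.diagonal (a ∘ Sum.inr) * Matrix.projVandermonde (c ∘ Sum.inr) (d ∘ Sum.inr))
      (Matrix.diagonal (b ∘ Sum.inr) * Matrix.projVandermonde (c ∘ Sum.inr) (d ∘ Sum.inr)) := by
  ext (i | i) (j | j) <;>
    simp [doubleVandermonde, Matrix.projVandermonde_apply, Matrix.rectVandermonde_apply]

lemma det_doubleVandermonde_comp_perm [Fintype ι] [DecidableEq ι]
    (e : Fin n ⊕ Fin n ≃ ι) (a b c d : ι → R) (σ : Equiv.Perm ι) :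
    (doubleVandermonde n (a ∘ σ ∘ e) (b ∘ σ ∘ e) (c ∘ σ ∘ e) (d ∘ σ ∘ e)).det =
      (Equiv.Perm.sign σ : ℤ) * (doubleVandermonde n (a ∘ e) (b ∘ e) (c ∘ e) (d ∘ e)).det := by
  rw [← Equiv.Perm.sign_permCongr e.symm σ, ← Matrix.det_permute]
  congr 1
  ext r s
  simp [doubleVandermonde, Equiv.permCongr_apply, Matrix.rectVandermonde_apply]

lemma projVandermonde_mul_lagrangeCoeff (c d : Fin n → R) :
    Matrix.projVandermonde c d * lagrangeCoeff c d =
      Matrix.diagonal fun j ↦ ∏ l ∈ Finset.univ.erase j, wedge c d j l := by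
  ext i j
  rw [Matrix.projVandermonde, rectVandermonde_mul_lagrangeCoeff, Matrix.diagonal_apply]
  split_ifs with hij
  · subst hij
    simp only [wedge]
  · exact Finset.prod_eq_zero (Finset.mem_erase.mpr ⟨hij, Finset.mem_univ i⟩)
      (by ring)

lemma prod_prod_Ioi_neg_one (n : ℕ) :
    ∏ i : Fin n, ∏ _j ∈ Finset.Ioi i, (-1 : R) = (-1) ^ n.choose 2 := by
  simp only [Finset.prod_const, Fin.card_Ioi, Finset.prod_pow_eq_pow_sum]
  rw [Fin.sum_univ_eq_sum_range fun i ↦ n - 1 - i, Finset.sum_range_reflect fun i ↦ i,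
    Finset.sum_range_id, Nat.choose_two_right]

lemma prod_prod_erase_wedge (c d : Fin n → R) :
    ∏ j, ∏ l ∈ Finset.univ.erase j, wedge c d j l =
      (-1) ^ n.choose 2 * (Matrix.projVandermonde c d).det ^ 2 := by
  have hneg (i j : Fin n) :
      wedge c d i j * wedge c d j i = -1 * (c j * d i - c i * d j) ^ 2 := by
    simp only [wedge]
    ring
  simp only [Finset.erase_eq, ← Finset.compl_eq_univ_sdiff]
  rw [← Finset.prod_prod_Ioi_mul_eq_prod_prod_off_diag]
  simp only [hneg, Finset.prod_mul_distrib, Finset.prod_pow, Matrix.det_projVandermonde,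
    prod_prod_Ioi_neg_one]

lemma det_doubleVandermonde_mul_sq (a b c d : Fin n ⊕ Fin n → R) :
    (doubleVandermonde n a b c d).det * (lagrangeCoeff (c ∘ Sum.inr) (d ∘ Sum.inr)).det ^ 2 =
      (∏ j, ∏ l ∈ Finset.univ.erase j, wedge c d (.inr j) (.inr l)) *
        (Matrix.of fun i j : Fin n ↦ (∏ l ∈ Finset.univ.erase j, wedge c d (.inl i) (.inr l)) *
          wedge a b (.inl i) (.inr j)).det := by
  set W := lagrangeCoeff (c ∘ Sum.inr) (d ∘ Sum.inr)
  set P := Matrix.projVandermonde (c ∘ Sum.inl) (d ∘ Sum.inl) * W with hP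
  set δ : Fin n → R := fun j ↦ ∏ l ∈ Finset.univ.erase j, wedge c d (.inr j) (.inr l)
  have hδ : Matrix.projVandermonde (c ∘ Sum.inr) (d ∘ Sum.inr) * W = Matrix.diagonal δ :=
    projVandermonde_mul_lagrangeCoeff _ _
  have hmul : doubleVandermonde n a b c d * Matrix.fromBlocks W 0 0 W = Matrix.fromBlocks
      (Matrix.diagonal (a ∘ Sum.inl) * P) (Matrix.diagonal (b ∘ Sum.inl) * P)
      (Matrix.diagonal (a ∘ Sum.inr) * Matrix.diagonal δ)
      (Matrix.diagonal (b ∘ Sum.inr) * Matrix.diagonal δ) := by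
    simp [doubleVandermonde_eq_fromBlocks, Matrix.fromBlocks_multiply, Matrix.mul_assoc, hP, hδ]
  have hcomm : Commute (Matrix.diagonal (a ∘ Sum.inr) * Matrix.diagonal δ)
      (Matrix.diagonal (b ∘ Sum.inr) * Matrix.diagonal δ) := by
    simp [Commute, SemiconjBy, mul_comm, mul_left_comm]
  have hentry : Matrix.diagonal (a ∘ Sum.inl) * P *
        (Matrix.diagonal (b ∘ Sum.inr) * Matrix.diagonal δ) -
      Matrix.diagonal (b ∘ Sum.inl) * P * (Matrix.diagonal (a ∘ Sum.inr) * Matrix.diagonal δ) =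
      Matrix.of fun i j ↦ δ j * ((∏ l ∈ Finset.univ.erase j, wedge c d (.inl i) (.inr l)) *
        wedge a b (.inl i) (.inr j)) := by
    ext i j
    have hPij : P i j = ∏ l ∈ Finset.univ.erase j, wedge c d (.inl i) (.inr l) :=
      rectVandermonde_mul_lagrangeCoeff _ _ _ _ _ _
    simp only [Matrix.diagonal_mul_diagonal, Matrix.sub_apply, Matrix.mul_diagonal,
      Matrix.diagonal_mul, Matrix.of_apply, hPij, Function.comp_apply]
    simp only [wedge]
    ring
  have hdet := congrArg Matrix.det hmul
  rw [Matrix.det_mul, Matrix.det_fromBlocks_zero₂₁, det_fromBlocks_of_commute _ _ hcomm, hentry,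
    ← sq] at hdet
  rw [hdet]
  exact Matrix.det_mul_row δ _

theorem det_doubleVandermonde {K : Type*} [Field K] (a b c d : Fin n ⊕ Fin n → K)
    (hright : ∀ j l, j ≠ l → wedge c d (.inr j) (.inr l) ≠ 0)
    (hcross : ∀ i j, wedge c d (.inl i) (.inr j) ≠ 0) :
    (doubleVandermonde n a b c d).det = (-1) ^ n.choose 2 *
      ((∏ i, ∏ j, wedge c d (.inl i) (.inr j)) *
        (Matrix.of fun i j ↦ wedge a b (.inl i) (.inr j) / wedge c d (.inl i) (.inr j)).det) := by
  set V := Matrix.projVandermonde (c ∘ Sum.inr) (d ∘ Sum.inr)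
  set W := lagrangeCoeff (c ∘ Sum.inr) (d ∘ Sum.inr)
  set s : K := (-1) ^ n.choose 2
  set Δ : K := ∏ j, ∏ l ∈ Finset.univ.erase j, wedge c d (.inr j) (.inr l)
  have hΔ : Δ ≠ 0 := Finset.prod_ne_zero_iff.mpr fun j _ ↦ Finset.prod_ne_zero_iff.mpr
    fun l hl ↦ hright j l (Finset.ne_of_mem_erase hl).symm
  have hVW : V.det * W.det = Δ := by
    rw [← Matrix.det_mul, projVandermonde_mul_lagrangeCoeff, Matrix.det_diagonal]
    rfl
  have hV : Δ = s * V.det ^ 2 := prod_prod_erase_wedge _ _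
  have hrow (i j : Fin n) : (∏ l ∈ Finset.univ.erase j, wedge c d (.inl i) (.inr l)) *
      wedge a b (.inl i) (.inr j) = (∏ l, wedge c d (.inl i) (.inr l)) *
        (wedge a b (.inl i) (.inr j) / wedge c d (.inl i) (.inr j)) := by
    rw [← Finset.mul_prod_erase _ _ (Finset.mem_univ j)]
    field_simp [hcross i j]
  have hdet := det_doubleVandermonde_mul_sq a b c d
  simp only [hrow] at hdet
  have hcol := Matrix.det_mul_column (fun i ↦ ∏ l, wedge c d (.inl i) (.inr l))
    (Matrix.of fun i j ↦ wedge a b (.inl i) (.inr j) / wedge c d (.inl i) (.inr j))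
  simp only [Matrix.of_apply] at hcol
  rw [hcol] at hdet
  have hs : s * s = 1 := by
    rw [← mul_pow, neg_one_mul, neg_neg, one_pow]
  refine mul_right_cancel₀ (pow_ne_zero 2 hΔ) ?_
  linear_combination V.det ^ 2 * hdet
    - (doubleVandermonde n a b c d).det * (V.det * W.det + Δ) * hVW
    - Δ * (∏ i, ∏ l, wedge c d (.inl i) (.inr l)) *
      (Matrix.of fun i j ↦ wedge a b (.inl i) (.inr j) / wedge c d (.inl i) (.inr j)).det *
      (s * hV + V.det ^ 2 * hs)

theorem det_doubleVandermonde_of_wedge_eq_mul {K : Type*} [Field K]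
    {a b c d : Fin n ⊕ Fin n → K} {h : Fin n ⊕ Fin n → Fin n ⊕ Fin n → K}
    (hmul : ∀ r s, h r s * wedge a b r s = wedge c d r s)
    (hne : Pairwise fun r s ↦ wedge c d r s ≠ 0) :
    (doubleVandermonde n a b c d).det = (-1) ^ n.choose 2 *
      ((∏ i, ∏ j, h (.inl i) (.inr j)) * (∏ i, ∏ j, wedge a b (.inl i) (.inr j)) *
        (Matrix.of fun i j ↦ (h (.inl i) (.inr j))⁻¹).det) := by
  have hquot (i j : Fin n) : wedge a b (.inl i) (.inr j) / wedge c d (.inl i) (.inr j) =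
      (h (.inl i) (.inr j))⁻¹ := by
    have hne' : wedge c d (.inl i) (.inr j) ≠ 0 := hne Sum.inl_ne_inr
    rw [← hmul] at hne' ⊢
    exact div_mul_cancel_right₀ (right_ne_zero_of_mul hne') _
  rw [det_doubleVandermonde a b c d (fun j l hjl ↦ hne (Sum.inr_injective.ne hjl))
    fun i j ↦ hne Sum.inl_ne_inr]
  simp only [hquot]
  simp only [← hmul, Finset.prod_mul_distrib]

end DoubleVandermonde

section Tsuchiya

variable {τ : ℂ} {k : ℕ}

/-- The elliptic counterpart `ϑ₁(x - y) ϑ₁(x + y)` of the difference `x - y`, out of which the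
Vandermonde-type product `𝔻` is built. -/
def thDiff (τ x y : ℂ) : ℂ := th1 (x - y) τ * th1 (x + y) τ

lemma thDiff_eq_wedge (hτ : 0 < τ.im) (x y : ℂ) : thDiff τ x y =
    wedge (fun z ↦ th3 (2 * z) (2 * τ)) (fun z ↦ th2 (2 * z) (2 * τ)) x y :=
  th1_sub_mul_th1_add hτ x y

lemma hh_mul_thDiff (x y : ℂ) :
    hh τ x y * thDiff τ x y = th1Third τ (x - y) * th1Third τ (x + y) := by
  unfold hh thDiff th1Third
  ring

theorem exists_hh_mul_thDiff_eq_wedge (hτ : 0 < τ.im) :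
    ∃ C D : ℂ → ℂ, ∀ x y, hh τ x y * thDiff τ x y = wedge C D x y := by
  obtain ⟨K, hK⟩ := exists_th1Third_eq_mul_th1 hτ
  refine ⟨fun z ↦ K ^ 2 * th3 (2 * (3 * z)) (2 * (3 * τ)),
    fun z ↦ th2 (2 * (3 * z)) (2 * (3 * τ)), fun x y ↦ ?_⟩
  have hadd := th1_sub_mul_th1_add (τ := 3 * τ) (by simpa using hτ) (3 * x) (3 * y)
  rw [hh_mul_thDiff, hK, hK, mul_sub, mul_add, wedge]
  linear_combination K ^ 2 * hadd

lemma vdTheta_eq_prod_thDiff {n : ℕ} (y : Fin n → ℂ) :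
    vdTheta τ y = ∏ i, ∏ j ∈ Finset.Ioi i, thDiff τ (y j) (y i) := by
  simp only [vdTheta, ← Finset.filter_lt_eq_Ioi, Finset.prod_filter, thDiff]

lemma vdTheta_ne_zero {n : ℕ} {y : Fin n → ℂ}
    (hy : Pairwise fun i j ↦ thDiff τ (y j) (y i) ≠ 0) : vdTheta τ y ≠ 0 := by
  rw [vdTheta_eq_prod_thDiff]
  exact Finset.prod_ne_zero_iff.mpr fun i _ ↦ Finset.prod_ne_zero_iff.mpr fun j hj ↦
    hy (Finset.mem_Ioi.mp hj).ne

lemma vdTheta_comp_perm (hτ : 0 < τ.im) {n : ℕ} (y : Fin n → ℂ) (σ : Equiv.Perm (Fin n)) :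
    vdTheta τ (y ∘ σ) = (Equiv.Perm.sign σ : ℤ) * vdTheta τ y := by
  have hdet (y : Fin n → ℂ) : vdTheta τ y = (Matrix.projVandermonde
      (fun i ↦ th3 (2 * y i) (2 * τ)) (fun i ↦ th2 (2 * y i) (2 * τ))).det := by
    simp only [vdTheta_eq_prod_thDiff, Matrix.det_projVandermonde, thDiff_eq_wedge hτ, wedge,
      mul_comm (th2 _ _) (th3 _ _)]
  rw [hdet, hdet, ← Matrix.det_permute]
  rfl

/-- The identification of `Fin k ⊕ Fin k` with `Fin (2 * k)` under which the two summands index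
`firstHalf` and `secondHalf`. -/
def halfEquiv (k : ℕ) : Fin k ⊕ Fin k ≃ Fin (2 * k) :=
  finSumFinEquiv.trans (finCongr (two_mul k).symm)

lemma apply_halfEquiv_inl (x : Fin (2 * k) → ℂ) (i : Fin k) :
    x (halfEquiv k (.inl i)) = firstHalf x i := rfl

lemma apply_halfEquiv_inr (x : Fin (2 * k) → ℂ) (i : Fin k) :
    x (halfEquiv k (.inr i)) = secondHalf x i := rfl

lemma prod_lt_halfEquiv {M : Type*} [CommMonoid M] (F : Fin (2 * k) → Fin (2 * k) → M) :
    (∏ r, ∏ s, if r < s then F r s else 1) =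
      (∏ i, ∏ j, if i < j then F (halfEquiv k (.inl i)) (halfEquiv k (.inl j)) else 1) *
      (∏ i, ∏ j, if i < j then F (halfEquiv k (.inr i)) (halfEquiv k (.inr j)) else 1) *
      ∏ i, ∏ j, F (halfEquiv k (.inl i)) (halfEquiv k (.inr j)) := by
  have hinl (i j : Fin k) : halfEquiv k (.inl i) < halfEquiv k (.inl j) ↔ i < j := by
    simp [halfEquiv, (Fin.strictMono_castAdd k).lt_iff_lt]
  have hinr (i j : Fin k) : halfEquiv k (.inr i) < halfEquiv k (.inr j) ↔ i < j := by
    simp [halfEquiv]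
  have hlt (i j : Fin k) : halfEquiv k (.inl i) < halfEquiv k (.inr j) := by
    simp only [halfEquiv, Equiv.trans_apply, finSumFinEquiv_apply_left, finSumFinEquiv_apply_right,
      finCongr_apply, Fin.lt_def, Fin.val_cast, Fin.val_castAdd, Fin.val_natAdd]
    omega
  simp only [← (halfEquiv k).prod_comp, Fintype.prod_sum_type, hinl, hinr, hlt, (hlt _ _).not_gt,
    if_true, if_false, Finset.prod_mul_distrib, Finset.prod_const_one]
  rw [mul_one, mul_comm (∏ i, ∏ j, F (halfEquiv k (.inl i)) _), mul_assoc]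

lemma vdTheta_eq_vdTheta_halves_mul (x : Fin (2 * k) → ℂ) :
    vdTheta τ x = vdTheta τ (firstHalf x) * vdTheta τ (secondHalf x) *
      ∏ i, ∏ j, thDiff τ (secondHalf x j) (firstHalf x i) :=
  prod_lt_halfEquiv fun r s ↦ thDiff τ (x s) (x r)

theorem tsuchiya_mul_vdTheta {A B C D : ℂ → ℂ}
    (hAB : ∀ x y, thDiff τ x y = wedge A B x y)
    (hCD : ∀ x y, hh τ x y * thDiff τ x y = wedge C D x y) {x : Fin (2 * k) → ℂ}
    (hx : Pairwise fun r s ↦ hh τ (x r) (x s) * thDiff τ (x r) (x s) ≠ 0) :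
    tsuchiya τ k x * vdTheta τ x = (-1) ^ (k * k + k.choose 2) *
      (doubleVandermonde k (A ∘ x ∘ halfEquiv k) (B ∘ x ∘ halfEquiv k) (C ∘ x ∘ halfEquiv k)
        (D ∘ x ∘ halfEquiv k)).det := by
  have hhalf (r s) (hrs : r ≠ s) := hx ((halfEquiv k).injective.ne hrs)
  have hfirst : vdTheta τ (firstHalf x) ≠ 0 := vdTheta_ne_zero fun i j hij ↦
    right_ne_zero_of_mul (hhalf (.inl j) (.inl i) (Sum.inl_injective.ne hij.symm))
  have hsecond : vdTheta τ (secondHalf x) ≠ 0 := vdTheta_ne_zero fun i j hij ↦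
    right_ne_zero_of_mul (hhalf (.inr j) (.inr i) (Sum.inr_injective.ne hij.symm))
  have hwedgeAB (r s) : wedge (A ∘ x ∘ halfEquiv k) (B ∘ x ∘ halfEquiv k) r s =
      thDiff τ (x (halfEquiv k r)) (x (halfEquiv k s)) := (hAB _ _).symm
  have hwedgeCD (r s) : wedge (C ∘ x ∘ halfEquiv k) (D ∘ x ∘ halfEquiv k) r s =
      hh τ (x (halfEquiv k r)) (x (halfEquiv k s)) *
        thDiff τ (x (halfEquiv k r)) (x (halfEquiv k s)) := (hCD _ _).symm
  have hcross (i j : Fin k) : thDiff τ (secondHalf x j) (firstHalf x i) =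
      -1 * thDiff τ (firstHalf x i) (secondHalf x j) := by
    rw [hAB, hAB, wedge, wedge]
    ring
  rw [det_doubleVandermonde_of_wedge_eq_mul
    (h := fun r s ↦ hh τ (x (halfEquiv k r)) (x (halfEquiv k s)))
    (fun r s ↦ by rw [hwedgeAB, hwedgeCD]) fun r s hrs ↦ (hwedgeCD r s).trans_ne (hhalf r s hrs),
    vdTheta_eq_vdTheta_halves_mul, tsuchiya, pow_add]
  simp only [hcross, hwedgeAB, apply_halfEquiv_inl, apply_halfEquiv_inr, Finset.prod_mul_distrib,
    Finset.prod_const, Finset.card_univ, Fintype.card_fin, pow_mul]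
  have hsq : ((-1 : ℂ) ^ k.choose 2) ^ 2 = 1 := by rw [pow_right_comm, neg_one_sq, one_pow]
  field_simp
  rw [hsq]
  ring

theorem tsuchiya_comp_perm_of_pairwise_ne_zero (hτ : 0 < τ.im) {x : Fin (2 * k) → ℂ}
    (hx : Pairwise fun r s ↦ hh τ (x r) (x s) * thDiff τ (x r) (x s) ≠ 0)
    (σ : Equiv.Perm (Fin (2 * k))) : tsuchiya τ k (x ∘ σ) = tsuchiya τ k x := by
  obtain ⟨C, D, hCD⟩ := exists_hh_mul_thDiff_eq_wedge hτ
  have hid := tsuchiya_mul_vdTheta (thDiff_eq_wedge hτ) hCD hx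
  have hperm := tsuchiya_mul_vdTheta (thDiff_eq_wedge hτ) hCD (x := x ∘ σ)
    fun r s hrs ↦ hx (σ.injective.ne hrs)
  have hdet := det_doubleVandermonde_comp_perm (halfEquiv k) ((fun z ↦ th3 (2 * z) (2 * τ)) ∘ x)
    ((fun z ↦ th2 (2 * z) (2 * τ)) ∘ x) (C ∘ x) (D ∘ x) σ
  have hvd : vdTheta τ x ≠ 0 := vdTheta_ne_zero fun i j hij ↦ right_ne_zero_of_mul (hx hij.symm)
  have hsign : ((Equiv.Perm.sign σ : ℤ) : ℂ) ≠ 0 := by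
    exact_mod_cast (Equiv.Perm.sign σ).ne_zero
  simp only [Function.comp_assoc] at hperm hdet
  rw [vdTheta_comp_perm hτ, hdet] at hperm
  refine mul_right_cancel₀ (mul_ne_zero hsign hvd) ?_
  linear_combination hperm - (Equiv.Perm.sign σ : ℤ) * hid

end Tsuchiya

section Generic

open Filter Topology

lemma eventually_residual_ne_zero {f : ℂ → ℂ} (hf : Differentiable ℂ f) (hne : ∃ z, f z ≠ 0) :
    ∀ᶠ z in residual ℂ, f z ≠ 0 := by
  obtain ⟨z, hz⟩ := hne
  have hcodiscrete : f ⁻¹' {0}ᶜ ∈ codiscrete ℂ :=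
    (analyticOnNhd_univ_iff_differentiable.mpr hf).preimage_zero_mem_codiscrete hz
  have hpunctured (w : ℂ) : ∀ᶠ v in 𝓝[≠] w, f v ≠ 0 := by
    have h := disjoint_principal_right.mp (mem_codiscrete.mp hcodiscrete w)
    rwa [compl_compl] at h
  refine residual_of_dense_open (isOpen_ne_fun hf.continuous continuous_const) fun w ↦ ?_
  exact mem_closure_iff_frequently.mpr ((hpunctured w).frequently.filter_mono nhdsWithin_le_nhds)

lemma eventually_residual_clm_ne_zero {E : Type*} [AddCommGroup E] [Module ℂ E]
    [TopologicalSpace E] [ContinuousAdd E] [ContinuousSMul ℂ E] {f : ℂ → ℂ}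
    (hf : Differentiable ℂ f) (hne : ∃ z, f z ≠ 0) {g : E →L[ℂ] ℂ} (hg : g ≠ 0) :
    ∀ᶠ x in residual E, f (g x) ≠ 0 := by
  have hdense : Dense {z | f z ≠ 0} :=
    dense_of_mem_residual (eventually_residual_ne_zero hf hne)
  exact residual_of_dense_open
    ((isOpen_ne_fun hf.continuous continuous_const).preimage g.continuous)
    (hdense.preimage (g.isOpenMap_of_ne_zero hg))

lemma eventually_residual_pairwise_ne_zero {ι : Type*} [Finite ι] {f : ℂ → ℂ}
    (hf : Differentiable ℂ f) (hne : ∃ z, f z ≠ 0) : ∀ᶠ x : ι → ℂ in residual (ι → ℂ),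
      Pairwise fun r s ↦ f (x r - x s) * f (x r + x s) ≠ 0 := by
  classical
  refine eventually_all.mpr fun r ↦ eventually_all.mpr fun s ↦ eventually_all.mpr fun hrs ↦ ?_
  let p (r : ι) : (ι → ℂ) →L[ℂ] ℂ := .proj r
  have hsub : p r - p s ≠ 0 := fun h ↦ by
    simpa [p, hrs.symm] using DFunLike.congr_fun h (Pi.single r 1)
  have hadd : p r + p s ≠ 0 := fun h ↦ by
    simpa [p, hrs.symm] using DFunLike.congr_fun h (Pi.single r 1)
  filter_upwards [eventually_residual_clm_ne_zero hf hne hsub,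
    eventually_residual_clm_ne_zero hf hne hadd] with x hxsub hxadd
  exact mul_ne_zero hxsub hxadd

variable {τ : ℂ} {k : ℕ}

lemma exists_th1Third_ne_zero (hτ : 0 < τ.im) (hne : ∃ z, th1 z τ ≠ 0) :
    ∃ z, th1Third τ z ≠ 0 := by
  obtain ⟨w, hw⟩ := hne
  have htranslate (c : ℂ) : ∀ᶠ z in residual ℂ, th1 (z + c) τ ≠ 0 :=
    eventually_residual_ne_zero ((differentiable_th1 hτ).comp (by fun_prop))
      ⟨w - c, by rwa [sub_add_cancel]⟩
  obtain ⟨z, hzero, hadd, hsub⟩ :=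
    (dense_of_mem_residual ((htranslate 0).and ((htranslate ηc).and (htranslate (-ηc))))).nonempty
  rw [add_zero] at hzero
  exact ⟨z, mul_ne_zero (mul_ne_zero hzero hadd) hsub⟩

lemma dense_setOf_pairwise_hh_mul_thDiff_ne_zero {n : ℕ} (hτ : 0 < τ.im) (hne : ∃ z, th1 z τ ≠ 0) :
    Dense {x : Fin n → ℂ | Pairwise fun r s ↦ hh τ (x r) (x s) * thDiff τ (x r) (x s) ≠ 0} := by
  simp only [hh_mul_thDiff]
  exact dense_of_mem_residual <| eventually_residual_pairwise_ne_zero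
    (differentiable_th1Third hτ) (exists_th1Third_ne_zero hτ hne)

lemma continuous_thDiff (hτ : 0 < τ.im) : Continuous fun p : ℂ × ℂ ↦ thDiff τ p.1 p.2 := by
  have h := (differentiable_th1 hτ).continuous
  unfold thDiff
  fun_prop

lemma continuous_hh (hτ : 0 < τ.im) : Continuous fun p : ℂ × ℂ ↦ hh τ p.1 p.2 := by
  have h := (differentiable_th1 hτ).continuous
  unfold hh
  fun_prop

lemma continuous_vdTheta (hτ : 0 < τ.im) {n : ℕ} :
    Continuous fun y : Fin n → ℂ ↦ vdTheta τ y := by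
  have h := continuous_thDiff hτ
  simp only [vdTheta_eq_prod_thDiff]
  fun_prop

lemma continuousAt_tsuchiya (hτ : 0 < τ.im) {x : Fin (2 * k) → ℂ} (hx : tsuDefined τ k x) :
    ContinuousAt (tsuchiya τ k) x := by
  obtain ⟨hfirst, hsecond, hcross⟩ := hx
  have hfirstHalf : Continuous (firstHalf (k := k)) := continuous_pi fun _ ↦ continuous_apply _
  have hsecondHalf : Continuous (secondHalf (k := k)) := continuous_pi fun _ ↦ continuous_apply _
  have hhh := continuous_hh hτ
  have hvd := continuous_vdTheta hτ (n := k)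
  have hden : vdTheta τ (firstHalf x) * vdTheta τ (secondHalf x) ≠ 0 := mul_ne_zero
    (vdTheta_ne_zero fun i j hij ↦ mul_ne_zero (hfirst i j hij).1 (hfirst i j hij).2)
    (vdTheta_ne_zero fun i j hij ↦ mul_ne_zero (hsecond i j hij).1 (hsecond i j hij).2)
  have hmatrix : ContinuousAt (fun x : Fin (2 * k) → ℂ ↦
      Matrix.of fun i j : Fin k ↦ (hh τ (firstHalf x i) (secondHalf x j))⁻¹) x :=
    continuousAt_pi.mpr fun i ↦ continuousAt_pi.mpr fun j ↦
      ContinuousAt.inv₀ (by fun_prop) (hcross i j)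
  refine .mul (.div (by fun_prop) (by fun_prop) hden) ?_
  exact (continuous_id.matrix_det.continuousAt).comp hmatrix

end Generic

theorem stmt0 (τ : ℂ) (hτ : 0 < τ.im) (k : ℕ) (hk : 1 ≤ k)
    (x : Fin (2*k) → ℂ) (σ : Equiv.Perm (Fin (2*k)))
    (hx : tsuDefined τ k x) (hxσ : tsuDefined τ k (fun i => x (σ i))) :
    tsuchiya τ k (fun i => x (σ i)) = tsuchiya τ k x := by
  have hne : ∃ z, th1 z τ ≠ 0 := ⟨_, right_ne_zero_of_mul (hx.2.2 ⟨0, hk⟩ ⟨0, hk⟩)⟩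
  have hgeneric : ∃ᶠ y in nhds x, tsuchiya τ k (y ∘ σ) = tsuchiya τ k y :=
    (mem_closure_iff_frequently.mp (dense_setOf_pairwise_hh_mul_thDiff_ne_zero hτ hne x)).mono
      fun y hy ↦ tsuchiya_comp_perm_of_pairwise_ne_zero hτ hy σ
  have hperm : Continuous fun y : Fin (2 * k) → ℂ ↦ y ∘ σ := by fun_prop
  exact tendsto_nhds_unique_of_frequently_eq
    ((continuousAt_tsuchiya hτ hxσ).tendsto.comp hperm.continuousAt)
    (continuousAt_tsuchiya hτ hx) hgeneric

end
end

section
/- For each integer k ≥ 1 and every value of the parameter ζ, the polynomial H_{2k}(w₁,…,w_{2k}) has degree k−1 in each of its 2k variables, and the coefficient of w^{k−1} in the polynomial w ↦ H_{2k}(w₁,…,w_{2k−2}, w, 0) equals (ζ²−1)^{k−1} · H_{2(k−1)}(w₁,…,w_{2(k−1)}); equivalently, lim_{w→∞} w^{−(k−1)} H_{2k}(w₁,…,w_{2k−2}, w, 0) = (ζ²−1)^{k−1} H_{2(k−1)}(w₁,…,w_{2(k−1)}). -/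
noncomputable section

open Complex
open scoped BigOperators

/-
`H_{2k}` is a quotient whose determinant has entries `1 / h`. Taking the Schur complement of the
entry `1 / h(u, v)` that pairs the last variables `u`, `v` of the two halves, the identity
`h(x, v) h(u, y) - h(x, y) h(u, v) = (u - x) (v - y) H₄(x, u, y, v)` cancels every factor involving
`u` and `v`, and leaves the same quotient over the remaining variables with entries `H₄ / h`.
Since `H₄` is symmetric in `u` and `v`, so is the quotient; hence `H_{2k}` is symmetric in all its
variables. Since `H₄` is affine in `u`, the quotient is a polynomial in `u` of degree at most
`k - 1`; at `v = 0` the slope of `H₄` is the constant `ζ ^ 2 - 1`, so the top coefficient is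
`(ζ ^ 2 - 1) ^ (k - 1) H_{2(k-1)}`. All this holds at generic points, and extends to all points as
an identity of polynomials.
-/

theorem det_eq_mul_det_schur_last {K : Type*} [Field K] {k : ℕ}
    (M : Matrix (Fin (k + 1)) (Fin (k + 1)) K) (h : M (Fin.last k) (Fin.last k) ≠ 0) :
    M.det = M (Fin.last k) (Fin.last k) * Matrix.det (Matrix.of fun i j : Fin k =>
      M i.castSucc j.castSucc - M i.castSucc (Fin.last k) * (M (Fin.last k) (Fin.last k))⁻¹
        * M (Fin.last k) j.castSucc) := by
  let N : Matrix (Fin k ⊕ Fin 1) (Fin k ⊕ Fin 1) K := M.submatrix finSumFinEquiv finSumFinEquiv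
  have hdet : N.toBlocks₂₂.det = M (Fin.last k) (Fin.last k) := Matrix.det_unique _
  let _ : Invertible N.toBlocks₂₂ := N.toBlocks₂₂.invertibleOfIsUnitDet (hdet ▸ h.isUnit)
  have hM : M.det = N.det := (Matrix.det_submatrix_equiv_self finSumFinEquiv M).symm
  rw [hM, ← Matrix.fromBlocks_toBlocks N, Matrix.det_fromBlocks₂₂, hdet,
    Matrix.invOf_eq_nonsing_inv, Matrix.inv_subsingleton]
  congr 2
  ext i j
  simp only [Matrix.sub_apply, Matrix.mul_apply, Matrix.diagonal_apply_eq, Ring.inverse_eq_inv',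
    Finset.univ_unique, Finset.sum_singleton]
  rfl

section Vandermonde

variable {k : ℕ} (y : Fin k → ℂ)

theorem vdm_eq_det_vandermonde : vdm y = (Matrix.vandermonde y).det := by
  rw [Matrix.det_vandermonde, vdm]
  refine Finset.prod_congr rfl fun i _ => ?_
  rw [← Finset.prod_filter, Finset.filter_lt_eq_Ioi]

theorem vdm_comp_perm (σ : Equiv.Perm (Fin k)) :
    vdm (y ∘ σ) = (Equiv.Perm.sign σ : ℂ) * vdm y := by
  rw [vdm_eq_det_vandermonde, vdm_eq_det_vandermonde, ← Matrix.det_permute]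
  rfl

theorem vdm_snoc (u : ℂ) :
    vdm (Fin.snoc y u : Fin (k + 1) → ℂ) = vdm y * ∏ i, (u - y i) := by
  simp [vdm, Fin.prod_univ_castSucc, Finset.prod_mul_distrib, Fin.castSucc_lt_last,
    fun i : Fin k => (Fin.castSucc_lt_last i).not_gt]

end Vandermonde

section Genericity

variable {ζ : ℂ}

theorem hpol_comm (x y : ℂ) : hpol ζ x y = hpol ζ y x := by
  unfold hpol; ring

/-- The non-degeneracy condition on a pair of variables: no denominator of the determinant ratio
that involves both of them vanishes, whichever halves they belong to. -/
def Separated (ζ a b : ℂ) : Prop := a ≠ b ∧ hpol ζ a b ≠ 0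

theorem Separated.symm {a b : ℂ} (h : Separated ζ a b) : Separated ζ b a :=
  ⟨h.1.symm, hpol_comm a b ▸ h.2⟩

/-- The entries of the tuple `v` are pairwise separated. This makes the determinant ratio of any
rearrangement of `v` well defined. -/
def Generic {ι : Type*} (ζ : ℂ) (v : ι → ℂ) : Prop := Pairwise fun a b => Separated ζ (v a) (v b)

theorem Generic.comp {ι κ : Type*} {v : ι → ℂ} (hv : Generic ζ v) {f : κ → ι}
    (hf : Function.Injective f) : Generic ζ (v ∘ f) :=
  Pairwise.comp_of_injective hv hf

theorem Generic.cons {n : ℕ} {v : Fin n → ℂ} (hv : Generic ζ v) {z : ℂ}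
    (hz : ∀ a, Separated ζ z (v a)) : Generic ζ (Fin.cons z v : Fin (n + 1) → ℂ) :=
  pairwise_fin_succ_iff.2 ⟨fun a => (hz a).symm, hz, hv⟩

theorem Generic.hratioDefined {k : ℕ} {w : Fin (2 * k) → ℂ} (hw : Generic ζ w) :
    HratioDefined ζ k w := by
  refine ⟨fun i j hij => (hw ?_).1, fun i j hij => (hw ?_).1, fun i j => (hw ?_).2⟩ <;>
    simp only [ne_eq, Fin.mk.injEq] <;> omega

theorem eventually_separated (a : ℂ) : ∀ᶠ z in Filter.cofinite, Separated ζ z a := by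
  let p : Polynomial ℂ := 1 - .C (3 + ζ ^ 2) * .X * .C a
    + .C (1 - ζ ^ 2) * .X * .C a * (.X + .C a)
  have heval : ∀ z, p.eval z = hpol ζ z a := fun z => by simp [p, hpol]
  have hp : p ≠ 0 := fun h => by simpa [h, hpol] using heval 0
  filter_upwards [(Polynomial.finite_setOfPred_isRoot hp).eventually_cofinite_notMem,
    Filter.eventually_cofinite_ne a] with z hz hza
  exact ⟨hza, fun h => hz ((heval z).trans h)⟩

theorem eq_of_eval_eq_of_forall_eval_ne_zero {R σ ι : Type*} [CommRing R] [IsDomain R]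
    [Infinite R] (s : Finset ι) {f : ι → MvPolynomial σ R} (hf : ∀ i ∈ s, f i ≠ 0)
    {p q : MvPolynomial σ R} (h : ∀ w, (∀ i ∈ s, MvPolynomial.eval w (f i) ≠ 0) →
      MvPolynomial.eval w p = MvPolynomial.eval w q) : p = q := by
  refine mul_right_cancel₀ (Finset.prod_ne_zero_iff.2 hf) (MvPolynomial.funext fun w => ?_)
  rw [map_mul, map_mul, map_prod]
  by_cases hw : ∀ i ∈ s, MvPolynomial.eval w (f i) ≠ 0
  · rw [h w hw]
  · push Not at hw
    obtain ⟨i, hi, hw⟩ := hw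
    rw [Finset.prod_eq_zero hi hw, mul_zero, mul_zero]

theorem eq_of_eval_eq_of_generic_eval {σ ι : Type*} [Finite ι] {t : ι → MvPolynomial σ ℂ}
    (ht : Function.Injective t) (ht0 : ∀ i, MvPolynomial.constantCoeff (t i) = 0)
    {p q : MvPolynomial σ ℂ} (h : ∀ w, Generic ζ (fun i => MvPolynomial.eval w (t i)) →
      MvPolynomial.eval w p = MvPolynomial.eval w q) : p = q := by
  classical
  cases nonempty_fintype ι
  let hpolT (i j : ι) : MvPolynomial σ ℂ :=
    1 - .C (3 + ζ ^ 2) * t i * t j + .C (1 - ζ ^ 2) * t i * t j * (t i + t j)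
  have eval_hpolT (w : σ → ℂ) (i j : ι) : MvPolynomial.eval w (hpolT i j)
      = hpol ζ (MvPolynomial.eval w (t i)) (MvPolynomial.eval w (t j)) := by simp [hpolT, hpol]
  have hpolT_ne_zero (i j : ι) : hpolT i j ≠ 0 := fun h0 => by
    simpa [h0, ht0, hpol] using eval_hpolT 0 i j
  refine eq_of_eval_eq_of_forall_eval_ne_zero (f := fun a => (t a.1 - t a.2) * hpolT a.1 a.2)
    Finset.univ.offDiag (fun a ha => ?_) fun w hw => h w fun i j hij => ?_
  · exact mul_ne_zero (sub_ne_zero.2 (ht.ne (Finset.mem_offDiag.1 ha).2.2)) (hpolT_ne_zero _ _)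
  · have hne := hw (i, j) (by simpa using hij)
    rw [map_mul, mul_ne_zero_iff, map_sub, sub_ne_zero, eval_hpolT] at hne
    exact hne

theorem eq_of_eval_eq_of_generic {σ : Type*} [Finite σ] {p q : MvPolynomial σ ℂ}
    (h : ∀ w, Generic ζ w → MvPolynomial.eval w p = MvPolynomial.eval w q) : p = q :=
  eq_of_eval_eq_of_generic_eval (t := MvPolynomial.X) MvPolynomial.X_injective
    (MvPolynomial.constantCoeff_X ℂ) fun w hw => h w (by simpa only [MvPolynomial.eval_X] using hw)

theorem eval_snoc_zero_eq_of_generic {n : ℕ} {p : MvPolynomial (Fin (n + 1)) ℂ}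
    {q : MvPolynomial (Fin n) ℂ}
    (h : ∀ w : Fin n → ℂ, Generic ζ (Fin.snoc w 0 : Fin (n + 1) → ℂ) →
      MvPolynomial.eval (Fin.snoc w 0) p = MvPolynomial.eval w q)
    (w : Fin n → ℂ) : MvPolynomial.eval (Fin.snoc w 0) p = MvPolynomial.eval w q := by
  let t : Fin (n + 1) → MvPolynomial (Fin n) ℂ := Fin.snoc MvPolynomial.X 0
  have ht : Function.Injective t :=
    Fin.snoc_injective_iff.2 ⟨MvPolynomial.X_injective, fun ⟨i, hi⟩ => MvPolynomial.X_ne_zero i hi⟩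
  have ht0 i : MvPolynomial.constantCoeff (t i) = 0 := by
    refine Fin.lastCases ?_ (fun i => ?_) i <;> simp [t]
  have eval_t (w : Fin n → ℂ) : (fun i => MvPolynomial.eval w (t i)) = Fin.snoc w 0 := by
    ext i
    refine Fin.lastCases ?_ (fun i => ?_) i <;> simp [t]
  have eval_bind₁_t (w : Fin n → ℂ) :
      MvPolynomial.eval w (MvPolynomial.bind₁ t p) = MvPolynomial.eval (Fin.snoc w 0) p := by
    rw [← eval_t]
    exact MvPolynomial.aeval_bind₁ w t p
  have hpq : MvPolynomial.bind₁ t p = q :=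
    eq_of_eval_eq_of_generic_eval (ζ := ζ) ht ht0 fun w hw =>
      (eval_bind₁_t w).trans (h w (eval_t w ▸ hw))
  rw [← eval_bind₁_t, hpq]

end Genericity

section DetRatio

open Sum (inl inr)

variable {k : ℕ} {ζ : ℂ}

/-- The factor in front of the determinant in the definition of `H_{2k}`, with the two halves of the
variables indexed by the two summands. -/
def detPrefactor (ζ : ℂ) (v : Fin k ⊕ Fin k → ℂ) : ℂ :=
  (∏ i, ∏ j, hpol ζ (v (inl i)) (v (inr j))) / (vdm (v ∘ inl) * vdm (v ∘ inr))

/-- The determinant ratio `Hratio`, with the two halves of the variables indexed by the two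
summands. -/
def detRatio (ζ : ℂ) (v : Fin k ⊕ Fin k → ℂ) : ℂ :=
  detPrefactor ζ v * Matrix.det (Matrix.of fun i j => (hpol ζ (v (inl i)) (v (inr j)))⁻¹)

/-- The splitting of the variables of `H_{2k}` into two halves: `inl` indexes `firstHalf` and `inr`
indexes `secondHalf`. -/
def halvesEquiv (k : ℕ) : Fin k ⊕ Fin k ≃ Fin (2 * k) :=
  finSumFinEquiv.trans (finCongr (two_mul k).symm)

theorem Hratio_eq_detRatio (w : Fin (2 * k) → ℂ) :
    Hratio ζ k w = detRatio ζ (w ∘ halvesEquiv k) :=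
  rfl

theorem detRatio_comp_sumCongr (v : Fin k ⊕ Fin k → ℂ) (σ τ : Equiv.Perm (Fin k)) :
    detRatio ζ (v ∘ Equiv.sumCongr σ τ) = detRatio ζ v := by
  have hprod : ∏ i, ∏ j, hpol ζ (v (inl (σ i))) (v (inr (τ j)))
      = ∏ i, ∏ j, hpol ζ (v (inl i)) (v (inr j)) := by
    rw [Equiv.prod_comp σ fun i => ∏ j, hpol ζ (v (inl i)) (v (inr (τ j)))]
    exact Finset.prod_congr rfl fun i _ =>
      Equiv.prod_comp τ fun j => hpol ζ (v (inl i)) (v (inr j))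
  have hdet : Matrix.det (Matrix.of fun i j => (hpol ζ (v (inl (σ i))) (v (inr (τ j))))⁻¹)
      = (Equiv.Perm.sign σ : ℂ) * ((Equiv.Perm.sign τ : ℂ) *
        Matrix.det (Matrix.of fun i j => (hpol ζ (v (inl i)) (v (inr j)))⁻¹)) := by
    rw [← Matrix.det_permute', ← Matrix.det_permute]
    rfl
  have hvdm : vdm ((v ∘ Equiv.sumCongr σ τ) ∘ inl) = (Equiv.Perm.sign σ : ℂ) * vdm (v ∘ inl) ∧
      vdm ((v ∘ Equiv.sumCongr σ τ) ∘ inr) = (Equiv.Perm.sign τ : ℂ) * vdm (v ∘ inr) :=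
    ⟨vdm_comp_perm (v ∘ inl) σ, vdm_comp_perm (v ∘ inr) τ⟩
  simp only [detRatio, detPrefactor, hvdm, Function.comp_apply, Equiv.sumCongr_apply, Sum.map_inl,
    Sum.map_inr, hprod, hdet]
  rcases Int.units_eq_one_or (Equiv.Perm.sign σ) with hσ | hσ <;>
    rcases Int.units_eq_one_or (Equiv.Perm.sign τ) with hτ | hτ <;>
    simp [hσ, hτ, div_neg]

theorem detPrefactor_snoc (x y : Fin k → ℂ) (u v : ℂ) :
    detPrefactor ζ (Sum.elim (Fin.snoc x u : Fin (k + 1) → ℂ) (Fin.snoc y v))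
      = detPrefactor ζ (Sum.elim x y)
        * ((∏ i, hpol ζ (x i) v) * (∏ j, hpol ζ u (y j)) * hpol ζ u v
          / ((∏ i, (u - x i)) * ∏ j, (v - y j))) := by
  simp only [detPrefactor, Sum.elim_inl, Sum.elim_inr, Sum.elim_comp_inl, Sum.elim_comp_inr,
    vdm_snoc, Fin.prod_univ_castSucc, Fin.snoc_castSucc, Fin.snoc_last, Finset.prod_mul_distrib]
  rw [div_mul_div_comm]
  congr 1 <;> ring

/-- The polynomial `H₄(x, u, y, v)`, expanded; by the condensation identity it gives the entries of
the determinant that is left after the last variable of each half is eliminated. -/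
def H4 (ζ x u y v : ℂ) : ℂ :=
  (3 + ζ ^ 2) - (1 - ζ ^ 2) * (x + y + u + v) + (1 - ζ ^ 2) ^ 2 * x * y * u * v

theorem H4_swap (x u y v : ℂ) : H4 ζ x v y u = H4 ζ x u y v := by
  unfold H4; ring

theorem H4_eq_mul_add (x u y v : ℂ) :
    H4 ζ x u y v = u * ((1 - ζ ^ 2) * ((1 - ζ ^ 2) * x * y * v - 1)) + H4 ζ x 0 y v := by
  unfold H4; ring

theorem hpol_mul_hpol_sub_hpol_mul_hpol (x u y v : ℂ) :
    hpol ζ x v * hpol ζ u y - hpol ζ x y * hpol ζ u v = (u - x) * (v - y) * H4 ζ x u y v := by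
  unfold hpol H4; ring

theorem det_inv_hpol_snoc {x y : Fin k → ℂ} {u v : ℂ} (hxy : ∀ i j, hpol ζ (x i) (y j) ≠ 0)
    (hxv : ∀ i, hpol ζ (x i) v ≠ 0) (huy : ∀ j, hpol ζ u (y j) ≠ 0) (huv : hpol ζ u v ≠ 0) :
    Matrix.det (Matrix.of fun i j => (hpol ζ ((Fin.snoc x u : Fin (k + 1) → ℂ) i)
        ((Fin.snoc y v : Fin (k + 1) → ℂ) j))⁻¹)
      = (hpol ζ u v)⁻¹ * ((∏ i, (u - x i) / hpol ζ (x i) v) * ((∏ j, (v - y j) / hpol ζ u (y j))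
        * Matrix.det (Matrix.of fun i j => H4 ζ (x i) u (y j) v * (hpol ζ (x i) (y j))⁻¹))) := by
  rw [det_eq_mul_det_schur_last _ (by simpa using huv), ← Matrix.det_mul_row,
    ← Matrix.det_mul_column]
  simp only [Matrix.of_apply, Fin.snoc_castSucc, Fin.snoc_last, inv_inv]
  congr 3
  ext i j
  have := hxy i j
  have := hxv i
  have := huy j
  field_simp
  linear_combination hpol_mul_hpol_sub_hpol_mul_hpol (ζ := ζ) (x i) u (y j) v

theorem detRatio_snoc {x y : Fin k → ℂ} {u v : ℂ}
    (h : Generic ζ (Sum.elim (Fin.snoc x u : Fin (k + 1) → ℂ) (Fin.snoc y v))) :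
    detRatio ζ (Sum.elim (Fin.snoc x u : Fin (k + 1) → ℂ) (Fin.snoc y v))
      = detPrefactor ζ (Sum.elim x y)
        * Matrix.det (Matrix.of fun i j => H4 ζ (x i) u (y j) v * (hpol ζ (x i) (y j))⁻¹) := by
  have hux i : u - x i ≠ 0 := sub_ne_zero.2 (by
    simpa using (h (Sum.inl_injective.ne (Fin.castSucc_lt_last i).ne')).1)
  have hvy j : v - y j ≠ 0 := sub_ne_zero.2 (by
    simpa using (h (Sum.inr_injective.ne (Fin.castSucc_lt_last j).ne')).1)
  have hcross i j : hpol ζ ((Fin.snoc x u : Fin (k + 1) → ℂ) i)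
      ((Fin.snoc y v : Fin (k + 1) → ℂ) j) ≠ 0 := (h (Sum.inl_ne_inr (a := i) (b := j))).2
  have hxy i j : hpol ζ (x i) (y j) ≠ 0 := by simpa using hcross i.castSucc j.castSucc
  have hxv i : hpol ζ (x i) v ≠ 0 := by simpa using hcross i.castSucc (Fin.last k)
  have huy j : hpol ζ u (y j) ≠ 0 := by simpa using hcross (Fin.last k) j.castSucc
  have huv : hpol ζ u v ≠ 0 := by simpa using hcross (Fin.last k) (Fin.last k)
  have : ∏ i, (u - x i) ≠ 0 := Finset.prod_ne_zero_iff.2 fun i _ => hux i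
  have : ∏ j, (v - y j) ≠ 0 := Finset.prod_ne_zero_iff.2 fun j _ => hvy j
  have : ∏ i, hpol ζ (x i) v ≠ 0 := Finset.prod_ne_zero_iff.2 fun i _ => hxv i
  have : ∏ j, hpol ζ u (y j) ≠ 0 := Finset.prod_ne_zero_iff.2 fun j _ => huy j
  simp only [detRatio, Sum.elim_inl, Sum.elim_inr, detPrefactor_snoc,
    det_inv_hpol_snoc hxy hxv huy huv, Finset.prod_div_distrib]
  field_simp

theorem sumElim_snoc_comp_swap_last (x y : Fin k → ℂ) (u v : ℂ) :
    Sum.elim (Fin.snoc x u : Fin (k + 1) → ℂ) (Fin.snoc y v)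
        ∘ Equiv.swap (inl (Fin.last k)) (inr (Fin.last k))
      = Sum.elim (Fin.snoc x v : Fin (k + 1) → ℂ) (Fin.snoc y u) := by
  ext (i | i) <;> refine Fin.lastCases ?_ (fun i => ?_) i <;>
    simp [Equiv.swap_apply_of_ne_of_ne]

theorem detRatio_comp_swap_last {v : Fin (k + 1) ⊕ Fin (k + 1) → ℂ} (hv : Generic ζ v) :
    detRatio ζ (v ∘ Equiv.swap (inl (Fin.last k)) (inr (Fin.last k))) = detRatio ζ v := by
  obtain ⟨x, a, y, b, rfl⟩ : ∃ (x : Fin k → ℂ) (a : ℂ) (y : Fin k → ℂ) (b : ℂ),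
      v = Sum.elim (Fin.snoc x a : Fin (k + 1) → ℂ) (Fin.snoc y b) :=
    ⟨Fin.init (v ∘ inl), v (inl (Fin.last k)), Fin.init (v ∘ inr), v (inr (Fin.last k)), by
      rw [← Function.comp_apply (f := v), ← Function.comp_apply (f := v), Fin.snoc_init_self,
        Fin.snoc_init_self, Sum.elim_comp_inl_inr]⟩
  have hswap := hv.comp (Equiv.swap (inl (Fin.last k)) (inr (Fin.last k))).injective
  rw [sumElim_snoc_comp_swap_last] at hswap ⊢
  rw [detRatio_snoc hv, detRatio_snoc hswap]
  simp only [H4_swap]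

theorem detRatio_comp_swap_inl_inr {v : Fin k ⊕ Fin k → ℂ} (hv : Generic ζ v) (a b : Fin k) :
    detRatio ζ (v ∘ Equiv.swap (inl a) (inr b)) = detRatio ζ v := by
  obtain _ | k := k
  · exact a.elim0
  let τ : Equiv.Perm (Fin (k + 1) ⊕ Fin (k + 1)) :=
    Equiv.sumCongr (Equiv.swap a (Fin.last k)) (Equiv.swap b (Fin.last k))
  have hτ : Equiv.swap (inl a) (inr b)
      = τ * Equiv.swap (inl (Fin.last k)) (inr (Fin.last k)) * τ⁻¹ := by
    rw [← Equiv.swap_apply_apply]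
    simp [τ]
  calc detRatio ζ (v ∘ Equiv.swap (inl a) (inr b))
      = detRatio ζ (((v ∘ τ) ∘ Equiv.swap (inl (Fin.last k)) (inr (Fin.last k))) ∘ τ.symm) := by
        rw [hτ]; rfl
    _ = detRatio ζ v := by
        rw [Equiv.sumCongr_symm, detRatio_comp_sumCongr,
          detRatio_comp_swap_last (hv.comp τ.injective), detRatio_comp_sumCongr]

theorem detRatio_comp_perm {v : Fin k ⊕ Fin k → ℂ} (hv : Generic ζ v)
    (σ : Equiv.Perm (Fin k ⊕ Fin k)) : detRatio ζ (v ∘ σ) = detRatio ζ v := by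
  induction σ using Equiv.Perm.swap_induction_on generalizing v with
  | one => rfl
  | swap_mul σ a b _ ih =>
    rw [Equiv.Perm.coe_mul, ← Function.comp_assoc, ih (hv.comp (Equiv.injective _))]
    rcases a with a | a <;> rcases b with b | b
    · rw [← Equiv.Perm.sumCongr_swap_one]
      exact detRatio_comp_sumCongr v _ _
    · exact detRatio_comp_swap_inl_inr hv a b
    · rw [Equiv.swap_comm]
      exact detRatio_comp_swap_inl_inr hv b a
    · rw [← Equiv.Perm.sumCongr_one_swap]
      exact detRatio_comp_sumCongr v _ _

theorem Hratio_comp_perm {w : Fin (2 * k) → ℂ} (hw : Generic ζ w) (σ : Equiv.Perm (Fin (2 * k))) :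
    Hratio ζ k (w ∘ σ) = Hratio ζ k w := by
  have hσ : (w ∘ σ) ∘ halvesEquiv k
      = (w ∘ halvesEquiv k) ∘ (halvesEquiv k).symm.permCongr σ := by
    ext; simp
  rw [Hratio_eq_detRatio, hσ, detRatio_comp_perm (hw.comp (halvesEquiv k).injective),
    Hratio_eq_detRatio]

end DetRatio

section Condensed

open Sum (inl inr)

variable {k : ℕ} {ζ : ℂ}

/-- The determinant ratio over the halves `x, u` and `y, v` after cancellation of all factors
involving `u` and `v`, as a polynomial in `u`. The two matrices hold the slope and the constant term
of the affine functions `u ↦ H4 ζ (x i) u (y j) v / hpol ζ (x i) (y j)`. -/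
def condensed (ζ : ℂ) (x y : Fin k → ℂ) (v : ℂ) : Polynomial ℂ :=
  .C (detPrefactor ζ (Sum.elim x y)) * Matrix.det
    ((Polynomial.X : Polynomial ℂ) • (Matrix.of fun i j =>
        (1 - ζ ^ 2) * ((1 - ζ ^ 2) * x i * y j * v - 1) * (hpol ζ (x i) (y j))⁻¹).map Polynomial.C
      + (Matrix.of fun i j => H4 ζ (x i) 0 (y j) v * (hpol ζ (x i) (y j))⁻¹).map Polynomial.C)

theorem natDegree_condensed_le (x y : Fin k → ℂ) (v : ℂ) : (condensed ζ x y v).natDegree ≤ k :=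
  (Polynomial.natDegree_C_mul_le _ _).trans <|
    (Polynomial.natDegree_det_X_add_C_le _ _).trans_eq (Fintype.card_fin k)

theorem coeff_condensed_zero (x y : Fin k → ℂ) :
    (condensed ζ x y 0).coeff k = (ζ ^ 2 - 1) ^ k * detRatio ζ (Sum.elim x y) := by
  let N : Matrix (Fin k) (Fin k) ℂ := Matrix.of fun i j => (hpol ζ (x i) (y j))⁻¹
  have hslope : (Matrix.of fun i j =>
      (1 - ζ ^ 2) * ((1 - ζ ^ 2) * x i * y j * 0 - 1) * (hpol ζ (x i) (y j))⁻¹)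
        = (ζ ^ 2 - 1) • N := by
    ext i j
    simp [N]
  have hcard := Polynomial.coeff_det_X_add_C_card ((ζ ^ 2 - 1) • N)
    (Matrix.of fun i j => H4 ζ (x i) 0 (y j) 0 * (hpol ζ (x i) (y j))⁻¹)
  rw [Fintype.card_fin] at hcard
  rw [condensed, Polynomial.coeff_C_mul, hslope, hcard, Matrix.det_smul, Fintype.card_fin, detRatio]
  simp only [Sum.elim_inl, Sum.elim_inr, N]
  ring

theorem eval_condensed (x y : Fin k → ℂ) (u v : ℂ) :
    (condensed ζ x y v).eval u = detPrefactor ζ (Sum.elim x y)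
      * Matrix.det (Matrix.of fun i j => H4 ζ (x i) u (y j) v * (hpol ζ (x i) (y j))⁻¹) := by
  rw [condensed, Polynomial.eval_mul, Polynomial.eval_C, ← Polynomial.coe_evalRingHom,
    RingHom.map_det]
  congr 2
  ext i j
  rw [Matrix.of_apply, H4_eq_mul_add, add_mul, mul_assoc]
  simp

theorem insertNth_snoc_comp_halvesEquiv (w : Fin (2 * k) → ℂ) (u v : ℂ) :
    ((⟨k, by omega⟩ : Fin (2 * k + 1 + 1)).insertNth u (Fin.snoc w v : Fin (2 * k + 1) → ℂ)
        : Fin (2 * k + 1 + 1) → ℂ) ∘ halvesEquiv (k + 1)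
      = Sum.elim (Fin.snoc (firstHalf w) u : Fin (k + 1) → ℂ) (Fin.snoc (secondHalf w) v) := by
  let p : Fin (2 * k + 1 + 1) := ⟨k, by omega⟩
  have inl_castSucc i : halvesEquiv (k + 1) (inl i.castSucc)
      = p.succAbove (halvesEquiv k (inl i)).castSucc := by
    rw [Fin.succAbove_of_castSucc_lt _ _ (by simp [p, halvesEquiv, Fin.lt_def])]
    rfl
  have inl_last : halvesEquiv (k + 1) (inl (Fin.last k)) = p := rfl
  have inr_castSucc i : halvesEquiv (k + 1) (inr i.castSucc)
      = p.succAbove (halvesEquiv k (inr i)).castSucc := by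
    rw [Fin.succAbove_of_le_castSucc _ _ (by simp [p, halvesEquiv, Fin.le_def])]
    exact Fin.ext (Nat.add_right_comm k 1 i)
  have inr_last : halvesEquiv (k + 1) (inr (Fin.last k)) = p.succAbove (Fin.last (2 * k)) := by
    rw [Fin.succAbove_of_le_castSucc _ _ (Fin.le_def.2 (show k ≤ 2 * k by omega))]
    exact Fin.ext (show k + 1 + k = 2 * k + 1 by omega)
  ext (i | i) <;> refine Fin.lastCases ?_ (fun i => ?_) i <;>
    rw [Function.comp_apply]
  · rw [inl_last, Fin.insertNth_apply_same, Sum.elim_inl, Fin.snoc_last]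
  · rw [inl_castSucc, Fin.insertNth_apply_succAbove, Sum.elim_inl, Fin.snoc_castSucc,
      Fin.snoc_castSucc]
    rfl
  · rw [inr_last, Fin.insertNth_apply_succAbove, Sum.elim_inr, Fin.snoc_last, Fin.snoc_last]
  · rw [inr_castSucc, Fin.insertNth_apply_succAbove, Sum.elim_inr, Fin.snoc_castSucc,
      Fin.snoc_castSucc]
    rfl

theorem Hratio_cons_snoc {w : Fin (2 * k) → ℂ} {u v : ℂ}
    (h : Generic ζ (Fin.cons u (Fin.snoc w v : Fin (2 * k + 1) → ℂ) : Fin (2 * k + 1 + 1) → ℂ)) :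
    Hratio ζ (k + 1) (Fin.cons u (Fin.snoc w v : Fin (2 * k + 1) → ℂ) : Fin (2 * k + 1 + 1) → ℂ)
      = (condensed ζ (firstHalf w) (secondHalf w) v).eval u := by
  let p : Fin (2 * k + 1 + 1) := ⟨k, by omega⟩
  have hgen := (h.comp p.cycleRange.injective).comp (halvesEquiv (k + 1)).injective
  rw [Fin.cons_comp_cycleRange, insertNth_snoc_comp_halvesEquiv] at hgen
  rw [← Hratio_comp_perm h p.cycleRange, Fin.cons_comp_cycleRange, Hratio_eq_detRatio,
    insertNth_snoc_comp_halvesEquiv, detRatio_snoc hgen, eval_condensed]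

end Condensed

section HPoly

variable {k : ℕ} {ζ : ℂ}

/-- The polynomial `R` in `2k` variables is `H_{2k}`: it takes the value of the determinant ratio
wherever the latter is well defined. -/
def IsHPoly (ζ : ℂ) (k : ℕ) (R : MvPolynomial (Fin (2 * k)) ℂ) : Prop :=
  ∀ w, HratioDefined ζ k w → MvPolynomial.eval w R = Hratio ζ k w

theorem IsHPoly.isSymmetric {R : MvPolynomial (Fin (2 * k)) ℂ} (hR : IsHPoly ζ k R) :
    R.IsSymmetric := by
  intro σ
  refine eq_of_eval_eq_of_generic (ζ := ζ) fun w hw => ?_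
  rw [MvPolynomial.eval_rename, hR _ (hw.comp σ.injective).hratioDefined, hR w hw.hratioDefined,
    Hratio_comp_perm hw]

theorem IsHPoly.map_eval_finSuccEquiv {R : MvPolynomial (Fin (2 * k + 1 + 1)) ℂ}
    (hR : IsHPoly ζ (k + 1) R) {w : Fin (2 * k) → ℂ} {v : ℂ}
    (h : Generic ζ (Fin.snoc w v : Fin (2 * k + 1) → ℂ)) :
    (MvPolynomial.finSuccEquiv ℂ (2 * k + 1) R).map (MvPolynomial.eval (Fin.snoc w v))
      = condensed ζ (firstHalf w) (secondHalf w) v := by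
  refine Polynomial.eq_of_infinite_eval_eq _ _ (Filter.frequently_cofinite_iff_infinite.1 ?_)
  have hev : ∀ᶠ z in Filter.cofinite,
      ∀ a, Separated ζ z ((Fin.snoc w v : Fin (2 * k + 1) → ℂ) a) :=
    Filter.eventually_all.2 fun a => eventually_separated _
  refine (hev.mono fun z hz => ?_).frequently
  rw [← MvPolynomial.eval_eq_eval_mv_eval', ← Hratio_cons_snoc (h.cons hz)]
  exact hR _ (h.cons hz).hratioDefined

theorem IsHPoly.natDegree_finSuccEquiv_le {R : MvPolynomial (Fin (2 * k + 1 + 1)) ℂ}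
    (hR : IsHPoly ζ (k + 1) R) : (MvPolynomial.finSuccEquiv ℂ (2 * k + 1) R).natDegree ≤ k := by
  refine Polynomial.natDegree_le_iff_coeff_eq_zero.2 fun n hn => ?_
  refine eq_of_eval_eq_of_generic (ζ := ζ) fun w hw => ?_
  rw [← Fin.snoc_init_self w] at hw ⊢
  rw [← Polynomial.coeff_map, hR.map_eval_finSuccEquiv hw, map_zero]
  exact Polynomial.coeff_eq_zero_of_natDegree_lt ((natDegree_condensed_le _ _ _).trans_lt hn)

theorem IsHPoly.eval_coeff_finSuccEquiv {R : MvPolynomial (Fin (2 * k + 1 + 1)) ℂ}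
    (hR : IsHPoly ζ (k + 1) R) {R' : MvPolynomial (Fin (2 * k)) ℂ} (hR' : IsHPoly ζ k R')
    (w : Fin (2 * k) → ℂ) :
    MvPolynomial.eval (Fin.snoc w 0) ((MvPolynomial.finSuccEquiv ℂ (2 * k + 1) R).coeff k)
      = (ζ ^ 2 - 1) ^ k * MvPolynomial.eval w R' := by
  rw [← MvPolynomial.eval_C (f := w) ((ζ ^ 2 - 1) ^ k), ← map_mul]
  refine eval_snoc_zero_eq_of_generic (ζ := ζ) (fun w hw => ?_) w
  have hw' : Generic ζ w := by
    simpa only [Fin.snoc_comp_castSucc] using hw.comp (Fin.castSucc_injective _)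
  rw [← Polynomial.coeff_map, hR.map_eval_finSuccEquiv hw, coeff_condensed_zero,
    map_mul, MvPolynomial.eval_C, hR' w hw'.hratioDefined]
  rfl

theorem IsHPoly.eval_insertNth {R : MvPolynomial (Fin (2 * k + 1 + 1)) ℂ}
    (hR : IsHPoly ζ (k + 1) R) (p : Fin (2 * k + 1 + 1)) (z : ℂ) (w : Fin (2 * k + 1) → ℂ) :
    MvPolynomial.eval (p.insertNth z w) R
      = ((MvPolynomial.finSuccEquiv ℂ (2 * k + 1) R).map (MvPolynomial.eval w)).eval z := by
  rw [← MvPolynomial.eval_eq_eval_mv_eval', ← Fin.cons_comp_cycleRange,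
    ← MvPolynomial.eval_rename, hR.isSymmetric]

theorem extL_singleton_eq_insertNth (w : Fin (2 * k) → ℂ) (z : ℂ) :
    extL w [z] = (Fin.last (2 * k)).castSucc.insertNth z (Fin.snoc w 0 : Fin (2 * k + 1) → ℂ) := by
  rw [Fin.eq_insertNth_iff]
  refine ⟨by simp [extL], ?_⟩
  ext i
  refine Fin.lastCases ?_ (fun i => ?_) i <;> simp [extL, Fin.removeNth_apply]

end HPoly

theorem stmt2 (ζ : ℂ) (H : (k : ℕ) → (Fin (2*k) → ℂ) → ℂ) (hH : IsHFamily ζ H) (k : ℕ) :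
    (∀ (i : Fin (2*(k+1))) (w : Fin (2*(k+1)) → ℂ),
      ∃ P : Polynomial ℂ, P.natDegree ≤ k ∧
        ∀ z : ℂ, H (k+1) (Function.update w i z) = P.eval z) ∧
    (∀ w : Fin (2*k) → ℂ,
      ∃ P : Polynomial ℂ, P.natDegree ≤ k ∧
        (∀ z : ℂ, H (k+1) (extL w [z]) = P.eval z) ∧
        P.coeff k = (ζ^2 - 1)^k * H k w) := by
  obtain ⟨-, hpoly, hdef⟩ := hH
  obtain ⟨R, hR⟩ := hpoly (k + 1)
  obtain ⟨R', hR'⟩ := hpoly k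
  have hRH : IsHPoly ζ (k + 1) R := fun w hw => by rw [← hR, hdef _ _ hw]
  have hRH' : IsHPoly ζ k R' := fun w hw => by rw [← hR', hdef _ _ hw]
  let Q (w : Fin (2 * k + 1) → ℂ) : Polynomial ℂ :=
    (MvPolynomial.finSuccEquiv ℂ (2 * k + 1) R).map (MvPolynomial.eval w)
  have hdeg w : (Q w).natDegree ≤ k :=
    Polynomial.natDegree_map_le.trans hRH.natDegree_finSuccEquiv_le
  refine ⟨fun i w => ⟨Q (Fin.removeNth i w), hdeg _, fun z => ?_⟩,
    fun w => ⟨Q (Fin.snoc w 0), hdeg _, fun z => ?_, ?_⟩⟩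
  · rw [hR, ← Fin.insertNth_removeNth]
    exact hRH.eval_insertNth i z _
  · rw [hR, extL_singleton_eq_insertNth]
    exact hRH.eval_insertNth _ z _
  · rw [Polynomial.coeff_map, hRH.eval_coeff_finSuccEquiv hRH', hR']

end
end
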